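/- Let A be a C*-algebra with an AF presentation (A_k), and let B be a C*-algebra with an AF presentation (B_k) that has the Fermion property. Then there exist a ℂ-linear isometry γ : A → B and a ℂ-linear map δ : B → A with ‖δ(b)‖ ≤ ‖b‖ for all b ∈ B such that δ ∘ γ = id_A; consequently γ ∘ δ is a contractive idempotent linear map of B whose range equals γ(A), so γ(A) is a contractively complemented closed subspace of B. -/

import Mathlib

/-!
Statement 0 (Lemma 1.1 of the paper, abstract form).

If `A` is a C*-algebra with an AF presentation and `B` is a C*-algebra with an
AF presentation having the Fermion property, then there is a ℂ-linear isometry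
`γ : A → B` and a contractive ℂ-linear map `δ : B → A` with `δ ∘ γ = id`, so
that `γ ∘ δ` is a contractive idempotent with range `γ(A)`.
-/

/-- `S` is an AF presentation of the C*-algebra `A`: an increasing sequence of
finite-dimensional *-subalgebras whose union is dense. -/
def IsAFPresentation (A : Type*) [NonUnitalCStarAlgebra A]
    (S : ℕ → NonUnitalStarSubalgebra ℂ A) : Prop :=
  Monotone S ∧ (∀ k, FiniteDimensional ℂ (S k)) ∧ Dense (⋃ k, (S k : Set A))

/-- The presentation `S` has the Fermion property: there are indices
`n 0 < n 1 < ⋯` and nonzero minimal central projections `p k` of `S (n k)` such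
that for every minimal projection `e` of the corner `p k • S (n k) • p k`,
the projection `p (k+1) * e` is nonzero and is not a minimal projection of
`S (n (k+1))`. -/
def HasFermionProperty (A : Type*) [NonUnitalCStarAlgebra A]
    (S : ℕ → NonUnitalStarSubalgebra ℂ A) : Prop :=
  ∃ (n : ℕ → ℕ) (p : ℕ → A),
    StrictMono n ∧
    (∀ k, p k ∈ S (n k)) ∧
    (∀ k, p k * p k = p k ∧ star (p k) = p k) ∧
    (∀ k, p k ≠ 0) ∧
    -- `p k` is central in `S (n k)`
    (∀ k, ∀ a ∈ S (n k), p k * a = a * p k) ∧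
    -- `p k` is minimal among the central projections of `S (n k)`
    (∀ k, ∀ q ∈ S (n k), (q * q = q ∧ star q = q) → (∀ a ∈ S (n k), q * a = a * q) →
      q * p k = q → q ≠ 0 → q = p k) ∧
    -- every minimal projection `e` of the corner `p k * S (n k) * p k` meets the
    -- next summand with multiplicity at least two
    (∀ k, ∀ e ∈ S (n k), (e * e = e ∧ star e = e) → e ≠ 0 → e * p k = e →
      (∀ a ∈ S (n k), ∃ c : ℂ, e * a * e = c • e) →
      (p (k + 1) * e ≠ 0 ∧
        ∃ q ∈ S (n (k + 1)), (q * q = q ∧ star q = q) ∧ q ≠ 0 ∧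
          q * (p (k + 1) * e) = q ∧ (p (k + 1) * e) * q = q ∧ q ≠ p (k + 1) * e))

namespace FermionAF

open scoped ComplexOrder

section FD

variable {E : Type*} [NonUnitalCStarAlgebra E]

theorem closed_of_fd (S : NonUnitalStarSubalgebra ℂ E) [FiniteDimensional ℂ S] :
    IsClosed (S : Set E) := by
  have : FiniteDimensional ℂ S.toSubmodule := ‹FiniteDimensional ℂ S›
  exact S.toSubmodule.closed_of_finiteDimensional

theorem finite_quasispectrum (S : NonUnitalStarSubalgebra ℂ E) [FiniteDimensional ℂ S]
    {h : E} (hS : h ∈ S) : (quasispectrum ℝ h).Finite := by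
  rw [Unitization.quasispectrum_eq_spectrum_inr ℝ]
  set x : Unitization ℝ E := (h : Unitization ℝ E) with hx
  have hpow : ∀ n : ℕ, ∃ s : S, x ^ (n + 1) = ((s : E) : Unitization ℝ E) := by
    intro n
    induction n with
    | zero => exact ⟨⟨h, hS⟩, by simp [hx]⟩
    | succ n ih =>
      obtain ⟨s, hs⟩ := ih
      refine ⟨s * ⟨h, hS⟩, ?_⟩
      rw [pow_succ, hs, hx]
      simp
  choose s hs using hpow
  have hfd : FiniteDimensional ℝ S := FiniteDimensional.complexToReal S
  have : ¬ LinearIndependent ℝ s := by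
    intro hli
    have := hli.finite
    exact not_finite ℕ
  rw [not_linearIndependent_iff] at this
  obtain ⟨t, c, hc, i, hi, hci⟩ := this
  set P : Polynomial ℝ := ∑ n ∈ t, Polynomial.C (c n) * Polynomial.X ^ (n + 1) with hP
  have hP0 : P ≠ 0 := by
    intro h0
    have : P.coeff (i + 1) = 0 := by rw [h0]; simp
    rw [hP, Polynomial.finsetSum_coeff] at this
    simp [Polynomial.coeff_C_mul, Polynomial.coeff_X_pow, hi] at this
    exact hci this
  have hPx : Polynomial.aeval x P = 0 := by
    rw [hP, map_sum]
    have h1 : ∀ n ∈ t, Polynomial.aeval x (Polynomial.C (c n) * Polynomial.X ^ (n + 1))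
        = (Unitization.inrHom ℝ ℝ E) (((c n) • s n : S) : E) := by
      intro n _
      rw [map_mul, map_pow, Polynomial.aeval_X, hs, Polynomial.aeval_C,
        Algebra.algebraMap_eq_smul_one, smul_mul_assoc, one_mul]
      simp
    rw [Finset.sum_congr rfl h1, ← map_sum]
    have := congrArg (Subtype.val) hc
    simp only [ZeroMemClass.coe_zero] at this
    rw [← AddSubmonoidClass.coe_finsetSum, hc]
    simp
  refine Set.Finite.subset (P.roots.toFinset.finite_toSet) ?_
  intro r hr
  have := spectrum.subset_polynomial_aeval x P ⟨r, hr, rfl⟩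
  rw [hPx] at this
  have h0 : Polynomial.eval r P = 0 := by
    simpa using this
  simpa [hP0] using h0

/-- spectral projection at a nonzero point of the spectrum -/
theorem exists_spectral_proj (S : NonUnitalStarSubalgebra ℂ E) [FiniteDimensional ℂ S]
    {h : E} (hS : h ∈ S) (hsa : star h = h) (h0 : h ≠ 0) :
    ∃ p ∈ S, p * p = p ∧ star p = p ∧ p ≠ 0 ∧ ∃ r : ℂ, r ≠ 0 ∧ h * p = r • p ∧ p * h = r • p := by
  have hsa' : IsSelfAdjoint h := hsa
  have hcl : IsClosed (S : Set E) := closed_of_fd S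
  have hfin := finite_quasispectrum S hS
  have hc : ∀ f : ℝ → ℝ, ContinuousOn f (quasispectrum ℝ h) := fun f => hfin.continuousOn f
  obtain ⟨r, hr, hr0⟩ : ∃ r ∈ quasispectrum ℝ h, r ≠ 0 := by
    by_contra hcon
    push Not at hcon
    apply h0
    rw [← cfcₙ_id ℝ h, ← cfcₙ_zero ℝ h]
    exact cfcₙ_congr (fun x hx => by simp [hcon x hx])
  let f : ℝ → ℝ := fun x => if x = r then 1 else 0
  have f0 : f 0 = 0 := by simp [f, hr0.symm]
  have key : h * cfcₙ f h = (r : ℂ) • cfcₙ f h := by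
    conv_lhs => rw [← cfcₙ_id ℝ h]
    rw [cfcₙ_id ℝ h]
    nth_rewrite 1 [← cfcₙ_id ℝ h]
    rw [← cfcₙ_mul id f h (hc _) rfl (hc _) f0, Complex.coe_smul, ← cfcₙ_smul r f h (hc _) f0]
    apply cfcₙ_congr
    intro x _
    by_cases hx : x = r <;> simp [f, hx]
  have hst : star (cfcₙ f h) = cfcₙ f h := (cfcₙ_predicate f h : IsSelfAdjoint _)
  refine ⟨cfcₙ f h, cfcₙ_mem (𝕜' := ℂ) f hS, ?_, hst, ?_, r, by exact_mod_cast hr0, key, ?_⟩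
  · rw [← cfcₙ_mul f f h (hc _) f0 (hc _) f0]
    apply cfcₙ_congr
    intro x _
    by_cases hx : x = r <;> simp [f, hx]
  · intro hz
    have := cfcₙ_map_quasispectrum f h (hc _) f0
    have h1 : (1 : ℝ) ∈ quasispectrum ℝ (cfcₙ f h) := by
      rw [this]; exact ⟨r, hr, by simp [f]⟩
    rw [hz, Unitization.quasispectrum_eq_spectrum_inr ℝ, Unitization.inr_zero] at h1
    simp at h1
  · have := congrArg star key
    simpa [hst, hsa] using this

/-- minimal projections of `S` -/
def IsMinProj (S : NonUnitalStarSubalgebra ℂ E) (e : E) : Prop :=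
  e ∈ S ∧ e * e = e ∧ star e = e ∧ e ≠ 0 ∧ ∀ a ∈ S, ∃ c : ℂ, e * a * e = c • e

/-- the corner `q S q` as a subspace -/
def corner (S : NonUnitalStarSubalgebra ℂ E) (q : E) : Submodule ℂ E where
  carrier := {x | x ∈ S ∧ q * x = x ∧ x * q = x}
  add_mem' := by
    rintro a b ⟨h1, h2, h3⟩ ⟨k1, k2, k3⟩
    exact ⟨add_mem h1 k1, by rw [mul_add, h2, k2], by rw [add_mul, h3, k3]⟩
  zero_mem' := ⟨zero_mem _, by simp, by simp⟩
  smul_mem' := by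
    rintro c a ⟨h1, h2, h3⟩
    exact ⟨SMulMemClass.smul_mem c h1, by rw [mul_smul_comm, h2], by rw [smul_mul_assoc, h3]⟩

theorem corner_fd (S : NonUnitalStarSubalgebra ℂ E) [FiniteDimensional ℂ S] (q : E) :
    FiniteDimensional ℂ (corner S q) := by
  have : FiniteDimensional ℂ S.toSubmodule := ‹FiniteDimensional ℂ S›
  exact Submodule.finiteDimensional_of_le (S₂ := S.toSubmodule) (fun x hx => hx.1)

theorem corner_lt (S : NonUnitalStarSubalgebra ℂ E) [FiniteDimensional ℂ S] {p q : E}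
    (hq : q ∈ S) (hqq : q * q = q) (h1 : q * p = p) (h2 : p * q = p)
    (hne : p ≠ q) : Module.finrank ℂ (corner S p) < Module.finrank ℂ (corner S q) := by
  have := corner_fd S q
  apply Submodule.finrank_lt_finrank_of_lt
  refine lt_of_le_of_ne ?_ ?_
  · rintro x ⟨hx, hx1, hx2⟩
    exact ⟨hx, by rw [← hx1, ← mul_assoc, h1], by rw [← hx2, mul_assoc, h2]⟩
  · intro h
    have : q ∈ corner S p := by rw [h]; exact ⟨hq, hqq, hqq⟩
    exact hne (h2 ▸ this.2.1)

theorem exists_minProj (S : NonUnitalStarSubalgebra ℂ E) [FiniteDimensional ℂ S] :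
    ∀ (n : ℕ) (q : E), q ∈ S → q * q = q → star q = q → q ≠ 0 →
      Module.finrank ℂ (corner S q) = n → ∃ e, IsMinProj S e ∧ q * e = e ∧ e * q = e := by
  intro n
  induction n using Nat.strong_induction_on with
  | _ n ih =>
  intro q hq hqq hqs hq0 hn
  by_cases hex : ∃ p ∈ S, p * p = p ∧ star p = p ∧ p ≠ 0 ∧ q * p = p ∧ p * q = p ∧ p ≠ q
  · obtain ⟨p, hp, hpp, hps, hp0, h1, h2, hne⟩ := hex
    obtain ⟨e, he, he1, he2⟩ := ih _ (hn ▸ corner_lt S hq hqq h1 h2 hne) p hp hpp hps hp0 rfl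
    exact ⟨e, he, by rw [← he1, ← mul_assoc, h1], by rw [← he2, mul_assoc, h2]⟩
  · push Not at hex
    have hsa : ∀ h ∈ S, star h = h → q * h = h → h * q = h → ∃ c : ℂ, h = c • q := by
      intro h hS hs h1 h2
      by_cases h0 : h = 0
      · exact ⟨0, by simp [h0]⟩
      obtain ⟨p, hp, hpp, hps, hp0, r, hr, hhp, hph⟩ := exists_spectral_proj S hS hs h0
      have e1 : p = r⁻¹ • (h * p) := by rw [hhp, smul_smul, inv_mul_cancel₀ hr, one_smul]
      have e2 : p = r⁻¹ • (p * h) := by rw [hph, smul_smul, inv_mul_cancel₀ hr, one_smul]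
      have hpq : p = q := hex p hp hpp hps hp0
        (by rw [e1, mul_smul_comm, ← mul_assoc, h1]) (by rw [e2, smul_mul_assoc, mul_assoc, h2])
      exact ⟨r, by rw [← h2, ← hpq, hhp]⟩
    refine ⟨q, ⟨hq, hqq, hqs, hq0, ?_⟩, hqq, hqq⟩
    intro a ha
    set b := q * a * q with hb
    have hbS : b ∈ S := mul_mem (mul_mem hq ha) hq
    have hqb : q * b = b := by rw [hb, ← mul_assoc, ← mul_assoc, hqq]
    have hbq : b * q = b := by rw [hb, mul_assoc, hqq]
    have hqb' : q * star b = star b := by have := congrArg star hbq; simpa [hqs] using this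
    have hbq' : star b * q = star b := by have := congrArg star hqb; simpa [hqs] using this
    obtain ⟨c, hc⟩ := hsa (b + star b) (add_mem hbS (star_mem hbS)) (by simp [add_comm])
      (by rw [mul_add, hqb, hqb']) (by rw [add_mul, hbq, hbq'])
    obtain ⟨d, hd⟩ := hsa (Complex.I • (b - star b))
      (SMulMemClass.smul_mem _ (sub_mem hbS (star_mem hbS)))
      (by rw [star_smul, star_sub, star_star, Complex.star_def, Complex.conj_I, neg_smul, ← smul_neg, neg_sub])
      (by rw [mul_smul_comm, mul_sub, hqb, hqb']) (by rw [smul_mul_assoc, sub_mul, hbq, hbq'])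
    refine ⟨(c - Complex.I * d) / 2, ?_⟩
    have h1 : b - star b = (-Complex.I * d) • q := by
      rw [mul_smul, ← hd, smul_smul]; simp
    have h2 : (2 : ℂ) • b = (c - Complex.I * d) • q := by
      rw [two_smul, sub_smul, ← hc, sub_eq_add_neg, ← neg_smul, ← neg_mul, ← h1]; abel
    rw [div_eq_inv_mul, mul_smul, ← h2, smul_smul]; norm_num

/-- Every nonzero projection dominates a minimal one. -/
theorem exists_minProj_le (S : NonUnitalStarSubalgebra ℂ E) [FiniteDimensional ℂ S] {q : E}
    (hq : q ∈ S) (hqq : q * q = q) (hqs : star q = q) (hq0 : q ≠ 0) :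
    ∃ e, IsMinProj S e ∧ q * e = e ∧ e * q = e :=
  exists_minProj S _ q hq hqq hqs hq0 rfl

/-- A finite dimensional *-subalgebra has a unit. -/
theorem exists_unit (S : NonUnitalStarSubalgebra ℂ E) [FiniteDimensional ℂ S] :
    ∃ z ∈ S, z * z = z ∧ star z = z ∧ ∀ x ∈ S, z * x = x ∧ x * z = x := by
  have hfd : FiniteDimensional ℂ S.toSubmodule := ‹FiniteDimensional ℂ S›
  let N : Set ℕ := {n | ∃ z ∈ S, z * z = z ∧ star z = z ∧ Module.finrank ℂ (corner S z) = n}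
  have hbdd : BddAbove N := by
    refine ⟨Module.finrank ℂ S.toSubmodule, ?_⟩
    rintro n ⟨z, -, -, -, rfl⟩
    exact Submodule.finrank_mono (fun x hx => hx.1)
  have hne : N.Nonempty := ⟨_, 0, zero_mem _, by simp, by simp, rfl⟩
  obtain ⟨z, hz, hzz, hzs, hzn⟩ := Nat.sSup_mem hne hbdd
  have hl : ∀ x ∈ S, z * x = x := by
    intro x hx
    by_contra hcon
    set y := (x - z * x) with hy
    have hy0 : y ≠ 0 := fun h => hcon (sub_eq_zero.mp h).symm
    have hyS : y ∈ S := sub_mem hx (mul_mem hz hx)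
    have hzy : z * y = 0 := by rw [hy, mul_sub, ← mul_assoc, hzz, sub_self]
    have hyy : y * star y ≠ 0 := by
      intro h; exact hy0 ((CStarRing.mul_star_self_eq_zero_iff y).1 h)
    obtain ⟨p, hp, hpp, hps, hp0, r, hr, h1, h2⟩ := exists_spectral_proj S
      (mul_mem hyS (star_mem hyS)) (by simp) hyy
    have e1 : p = r⁻¹ • (y * star y * p) := by rw [h1, smul_smul, inv_mul_cancel₀ hr, one_smul]
    have hzp : z * p = 0 := by
      rw [e1, mul_smul_comm, ← mul_assoc, ← mul_assoc, hzy]; simp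
    have hpz : p * z = 0 := by have := congrArg star hzp; simpa [hzs, hps] using this
    have hmem : Module.finrank ℂ (corner S (z + p)) ∈ N :=
      ⟨z + p, add_mem hz hp, by rw [mul_add, add_mul, add_mul, hzz, hpp, hzp, hpz]; simp,
        by simp [hzs, hps], rfl⟩
    have hle := le_csSup hbdd hmem
    rw [← hzn] at hle
    refine absurd hle (not_le.mpr ?_)
    apply corner_lt S (add_mem hz hp) (by rw [mul_add, add_mul, add_mul, hzz, hpp, hzp, hpz]; simp)
      (by rw [add_mul, hzz, hpz, add_zero]) (by rw [mul_add, hzz, hzp, add_zero])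
    intro h
    exact hp0 (by simpa using h)
  refine ⟨z, hz, hzz, hzs, fun x hx => ⟨hl x hx, ?_⟩⟩
  have := congrArg star (hl (star x) (star_mem hx))
  simpa [hzs] using this

/-- from a nonzero element connecting a minimal projection to something, a partial isometry -/
theorem exists_pisom (S : NonUnitalStarSubalgebra ℂ E) {f : E} (hf : IsMinProj S f)
    {x : E} (hx : x ∈ S) (hfx : x * f ≠ 0) :
    ∃ c : ℂ, star (c • (x * f)) * (c • (x * f)) = f := by
  obtain ⟨hfS, hff, hfs, hf0, hmin⟩ := hf
  obtain ⟨c, hc⟩ := hmin (star x * x) (mul_mem (star_mem hx) hx)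
  have h1 : star (x * f) * (x * f) = c • f := by
    rw [star_mul, hfs, ← hc]; simp only [mul_assoc]
  have hn : ‖c • f‖ = ‖x * f‖ * ‖x * f‖ := by rw [← h1, CStarRing.norm_star_mul_self]
  -- c is a positive real
  have hfn : ‖f‖ = 1 := by
    have : ‖f‖ * ‖f‖ = ‖f‖ := by
      rw [← CStarRing.norm_star_mul_self, hfs, hff]
    have h0 : ‖f‖ ≠ 0 := norm_ne_zero_iff.mpr hf0
    exact mul_left_cancel₀ h0 (by rw [this, mul_one])
  have hcs : star c = c := by
    have h2 : star (c • f) = c • f := by rw [← h1]; simp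
    rw [star_smul, hfs] at h2
    have h3 : (star c - c) • f = 0 := by rw [sub_smul, h2, sub_self]
    rcases smul_eq_zero.mp h3 with h | h
    · exact sub_eq_zero.mp h
    · exact absurd h hf0
  -- nonnegativity
  let _ := CStarAlgebra.spectralOrder E
  have := CStarAlgebra.spectralOrderedRing E
  have hcre : (c.re : ℂ) = c := Complex.conj_eq_iff_re.mp hcs
  have hcpos : 0 < c.re := by
    rw [← hcre] at h1 hn
    have hnz : c.re ≠ 0 := by
      intro h
      rw [h] at hn
      simp at hn
      exact hfx hn
    by_contra hcon
    have hneg : c.re < 0 := lt_of_le_of_ne (not_lt.mp hcon) hnz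
    have p1 : 0 ≤ star (x * f) * (x * f) := star_mul_self_nonneg _
    have p2 : 0 ≤ star f * f := star_mul_self_nonneg f
    rw [hfs, hff] at p2
    have p3 : (c.re : ℂ) • f ≤ 0 := by
      rw [Complex.coe_smul]
      exact smul_nonpos_of_nonpos_of_nonneg hneg.le p2
    rw [h1] at p1
    have p4 : (c.re : ℂ) • f = 0 := le_antisymm p3 p1
    rcases smul_eq_zero.mp p4 with h | h
    · exact hnz (by exact_mod_cast h)
    · exact hf0 h
  refine ⟨((Real.sqrt c.re)⁻¹ : ℝ), ?_⟩
  rw [star_smul, smul_mul_smul_comm, h1, smul_smul, ← hcre]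
  have : (star (((Real.sqrt c.re)⁻¹ : ℝ) : ℂ) * (((Real.sqrt c.re)⁻¹ : ℝ) : ℂ) * ((c.re : ℝ) : ℂ)) = 1 := by
    rw [Complex.star_def, Complex.conj_ofReal, ← Complex.ofReal_mul, ← Complex.ofReal_mul]
    have h5 := Real.mul_self_sqrt hcpos.le
    have h6 : Real.sqrt c.re ≠ 0 := (Real.sqrt_pos.mpr hcpos).ne'
    rw [← Complex.ofReal_one]
    congr 1
    nth_rewrite 3 [← h5]
    field_simp
  rw [Complex.ofReal_re, this, one_smul]

end FD


section FD2

variable {E : Type*} [NonUnitalCStarAlgebra E]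

theorem exists_reps (S : NonUnitalStarSubalgebra ℂ E) [FiniteDimensional ℂ S] :
    ∃ s : Finset E, (∀ e ∈ s, IsMinProj S e) ∧
      (∀ e ∈ s, ∀ e' ∈ s, e ≠ e' → ∀ a ∈ S, e * a * e' = 0) ∧
      (∀ q, IsMinProj S q → ∃ e ∈ s, ∃ a ∈ S, q * a * e ≠ 0) := by
  classical
  let P : Finset E → Prop := fun s => (∀ e ∈ s, IsMinProj S e) ∧
      (∀ e ∈ s, ∀ e' ∈ s, e ≠ e' → ∀ a ∈ S, e * a * e' = 0)
  let N : Set ℕ := {n | ∃ s, P s ∧ s.card = n}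
  have hbdd : BddAbove N := by
    refine ⟨Module.finrank ℂ S, ?_⟩
    rintro n ⟨s, ⟨h1, h2⟩, rfl⟩
    let v : s → S := fun e => ⟨e.1, (h1 e.1 e.2).1⟩
    have hli : LinearIndependent ℂ v := by
      rw [Fintype.linearIndependent_iff]
      intro g hg i
      have h3 : ∑ j : s, g j • (j : E) = 0 := by
        have := congrArg Subtype.val hg
        simpa [v] using this
      have h4 := congrArg (fun y => (i : E) * y) h3
      simp only [Finset.mul_sum, mul_smul_comm, mul_zero] at h4
      rw [Finset.sum_eq_single i] at h4
      · rw [(h1 i.1 i.2).2.1] at h4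
        exact (smul_eq_zero.mp h4).resolve_right (h1 i.1 i.2).2.2.2.1
      · intro j _ hj
        have := h2 i.1 i.2 j.1 j.2 (fun h => hj (Subtype.ext h.symm)) i.1 (h1 i.1 i.2).1
        rw [(h1 i.1 i.2).2.1] at this
        rw [this, smul_zero]
      · simp
    have := hli.fintype_card_le_finrank
    simpa using this
  have hne : N.Nonempty := ⟨0, ∅, ⟨by simp, by simp⟩, rfl⟩
  obtain ⟨s, ⟨h1, h2⟩, hs⟩ := Nat.sSup_mem hne hbdd
  refine ⟨s, h1, h2, ?_⟩
  intro q hq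
  by_contra hcon
  push Not at hcon
  have hqs : q ∉ s := by
    intro h
    have := hcon q h q hq.1
    rw [hq.2.1, hq.2.1] at this
    exact hq.2.2.2.1 this
  have hmem : (insert q s).card ∈ N := by
    refine ⟨insert q s, ⟨?_, ?_⟩, rfl⟩
    · intro e he
      rcases Finset.mem_insert.mp he with rfl | he2
      · exact hq
      · exact h1 e he2
    · intro e he e' he' hne a ha
      rcases Finset.mem_insert.mp he with hA | he2 <;> rcases Finset.mem_insert.mp he' with hB | hB2
      · exact absurd (hA.trans hB.symm) hne
      · rw [hA]; exact hcon e' hB2 a ha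
      · have := congrArg star (hcon e he2 (star a) (star_mem ha))
        rw [hB]
        simpa [hq.2.2.1, (h1 e he2).2.2.1, mul_assoc] using this
      · exact h2 e he2 e' hB2 hne a ha
  have hle := le_csSup hbdd hmem
  rw [Finset.card_insert_of_notMem hqs, hs] at hle
  omega

theorem exists_decomp (S : NonUnitalStarSubalgebra ℂ E) [FiniteDimensional ℂ S] (s : Finset E)
    (h1 : ∀ e ∈ s, IsMinProj S e)
    (h3 : ∀ q, IsMinProj S q → ∃ e ∈ s, ∃ a ∈ S, q * a * e ≠ 0) :
    ∀ (n : ℕ) (q : E), q ∈ S → q * q = q → star q = q → Module.finrank ℂ (corner S q) = n →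
      ∃ (m : ℕ) (r : Fin m → s) (x : Fin m → E), (∀ t, x t ∈ S) ∧ (∀ t, x t * (r t : E) = x t) ∧
        (∀ t t', star (x t) * x t' = if t = t' then (r t : E) else 0) ∧
        ∑ t, x t * star (x t) = q := by
  intro n
  induction n using Nat.strong_induction_on with
  | _ n ih =>
  intro q hq hqq hqs hn
  by_cases hq0 : q = 0
  · exact ⟨0, Fin.elim0, Fin.elim0, fun t => t.elim0, fun t => t.elim0, fun t => t.elim0, by simp [hq0]⟩
  obtain ⟨e, he, he1, he2⟩ := exists_minProj_le S hq hqq hqs hq0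
  obtain ⟨f, hf, a, ha, hne⟩ := h3 e he
  obtain ⟨c, hc⟩ := exists_pisom S (h1 f hf) (mul_mem he.1 ha) hne
  set x := c • (e * a * f) with hx
  have hff : f * f = f := (h1 f hf).2.1
  have hfs : star f = f := (h1 f hf).2.2.1
  have hxS : x ∈ S := SMulMemClass.smul_mem _ (mul_mem (mul_mem he.1 ha) (h1 f hf).1)
  have hxf : x * f = x := by rw [hx, smul_mul_assoc, mul_assoc, hff]
  have hfx : f * star x = star x := by have := congrArg star hxf; simpa [hfs] using this
  have hqx : q * x = x := by rw [hx, mul_smul_comm, ← mul_assoc, ← mul_assoc, he1]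
  have hxq : star x * q = star x := by have := congrArg star hqx; simpa [hqs] using this
  set p := x * star x with hp
  have hps : star p = p := by simp [hp]
  have hpp : p * p = p := by
    rw [hp, mul_assoc, ← mul_assoc (star x), hc, hfx]
  have hqp : q * p = p := by rw [hp, ← mul_assoc, hqx]
  have hpq : p * q = p := by rw [hp, mul_assoc, hxq]
  have hp0 : p ≠ 0 := by
    intro h
    have : x = 0 := (CStarRing.mul_star_self_eq_zero_iff x).1 h
    rw [this] at hc
    simp at hc
    exact (h1 f hf).2.2.2.1 hc.symm
  have hxp : star x * p = star x := by rw [hp, ← mul_assoc, hc, hfx]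
  obtain ⟨m, r, y, hyS, hyr, hyo, hysum⟩ := ih _ (hn ▸ corner_lt S (p := q - p) hq hqq
    (by rw [mul_sub, hqq, hqp]) (by rw [sub_mul, hqq, hpq]) (by simpa using hp0)) (q - p)
    (sub_mem hq (mul_mem hxS (star_mem hxS)))
    (by rw [sub_mul, mul_sub, mul_sub, hqq, hqp, hpq, hpp]; simp) (by simp [hqs, hps]) rfl
  have hy : ∀ t, (q - p) * y t = y t := by
    intro t
    rw [← hysum, Finset.sum_mul, Finset.sum_eq_single t]
    · rw [mul_assoc, hyo, if_pos rfl, hyr]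
    · intro b _ hb
      rw [mul_assoc, hyo, if_neg hb, mul_zero]
    · simp
  have hxy : ∀ t, star x * y t = 0 := by
    intro t
    rw [← hy t, ← mul_assoc, mul_sub, hxq, hxp, sub_self, zero_mul]
  have hyx : ∀ t, star (y t) * x = 0 := by
    intro t
    have := congrArg star (hxy t)
    simpa using this
  refine ⟨m + 1, Fin.cons ⟨f, hf⟩ r, Fin.cons x y, ?_, ?_, ?_, ?_⟩
  · intro t
    refine Fin.cases ?_ (fun i => ?_) t
    · simpa using hxS
    · simpa using hyS i
  · intro t
    refine Fin.cases ?_ (fun i => ?_) t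
    · simpa using hxf
    · simpa using hyr i
  · intro t t'
    refine Fin.cases ?_ (fun i => ?_) t <;> refine Fin.cases ?_ (fun j => ?_) t'
    · simpa using hc
    · simpa [(Fin.succ_ne_zero j).symm] using hxy j
    · simpa using hyx i
    · simpa using hyo i j
  · rw [Fin.sum_univ_succ]
    simp only [Fin.cons_zero, Fin.cons_succ]
    rw [hysum, ← hp]; abel

/-- connection of two subprojections inside a factor -/
theorem exists_connect (S : NonUnitalStarSubalgebra ℂ E) [FiniteDimensional ℂ S] {p q h : E}
    (hpmin : ∀ q ∈ S, (q * q = q ∧ star q = q) → (∀ a ∈ S, q * a = a * q) →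
      q * p = q → q ≠ 0 → q = p)
    (hpc : ∀ a ∈ S, p * a = a * p)
    (hps : star p = p)
    (hq : q ∈ S) (hqq : q * q = q) (hqs : star q = q) (hq0 : q ≠ 0)
    (hhs : star h = h) (hqh : q * h = q) (hhq : h * q = q) (hne : q ≠ h)
    (hhp : h * p = h) : ∃ a ∈ S, (h - q) * a * q ≠ 0 := by
  by_contra hcon
  push Not at hcon
  have hcon' : ∀ a ∈ S, q * a * (h - q) = 0 := by
    intro a ha
    have := congrArg star (hcon (star a) (star_mem ha))
    simpa [hhs, hqs, mul_assoc] using this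
  have hqp : q * p = q := by
    rw [← hqh, mul_assoc, hhp]
  set d := h - q with hd
  have hds : star d = d := by simp [hd, hhs, hqs]
  let J : NonUnitalStarSubalgebra ℂ E :=
    { carrier := {x | x ∈ S ∧ x * p = x ∧ (∀ a ∈ S, x * a * d = 0) ∧ (∀ a ∈ S, d * a * x = 0)
        ∧ x * d = 0 ∧ d * x = 0}
      add_mem' := by
        rintro x y ⟨a1, a2, a3, a4, a5, a6⟩ ⟨b1, b2, b3, b4, b5, b6⟩
        refine ⟨add_mem a1 b1, by rw [add_mul, a2, b2], ?_, ?_, by rw [add_mul, a5, b5, add_zero],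
          by rw [mul_add, a6, b6, add_zero]⟩
        · intro a ha; rw [add_mul, add_mul, a3 a ha, b3 a ha, add_zero]
        · intro a ha; rw [mul_add, a4 a ha, b4 a ha, add_zero]
      zero_mem' := by
        refine ⟨zero_mem _, by simp, by simp, by simp, by simp, by simp⟩
      smul_mem' := by
        rintro c x ⟨a1, a2, a3, a4, a5, a6⟩
        refine ⟨SMulMemClass.smul_mem c a1, by rw [smul_mul_assoc, a2], ?_, ?_,
          by rw [smul_mul_assoc, a5, smul_zero], by rw [mul_smul_comm, a6, smul_zero]⟩
        · intro a ha; rw [smul_mul_assoc, smul_mul_assoc, a3 a ha, smul_zero]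
        · intro a ha; rw [mul_smul_comm, a4 a ha, smul_zero]
      mul_mem' := by
        rintro x y ⟨a1, a2, a3, a4, a5, a6⟩ ⟨b1, b2, b3, b4, b5, b6⟩
        refine ⟨mul_mem a1 b1, by rw [mul_assoc, b2], ?_, ?_, by rw [mul_assoc, b5, mul_zero],
          by rw [← mul_assoc, a6, zero_mul]⟩
        · intro a ha; rw [mul_assoc, mul_assoc, ← mul_assoc y, b3 a ha, mul_zero]
        · intro a ha; rw [← mul_assoc, a4 a ha, zero_mul]
      star_mem' := by
        rintro x ⟨a1, a2, a3, a4, a5, a6⟩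
        refine ⟨star_mem a1, ?_, ?_, ?_, ?_, ?_⟩
        · have := congrArg star a2
          rw [star_mul, hps] at this
          rw [← hpc _ (star_mem a1), this]
        · intro a ha
          have := congrArg star (a4 (star a) (star_mem ha))
          simpa [hds, mul_assoc] using this
        · intro a ha
          have := congrArg star (a3 (star a) (star_mem ha))
          simpa [hds, mul_assoc] using this
        · have := congrArg star a6
          simpa [hds] using this
        · have := congrArg star a5
          simpa [hds] using this }
  have hJS : ∀ x ∈ J, x ∈ S := fun x hx => hx.1
  have hfd : FiniteDimensional ℂ S.toSubmodule := ‹FiniteDimensional ℂ S›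
  have hJfd : FiniteDimensional ℂ J :=
    Submodule.finiteDimensional_of_le (S₁ := J.toSubmodule) (S₂ := S.toSubmodule) hJS
  obtain ⟨z, hz, hzz, hzs, hzu⟩ := exists_unit J
  have hqJ : q ∈ J := ⟨hq, hqp, hcon', hcon, by rw [hd, mul_sub, hqh, hqq, sub_self],
    by rw [hd, sub_mul, hhq, hqq, sub_self]⟩
  have hzS := hz.1
  have hzaJ : ∀ a ∈ S, z * a ∈ J := by
    intro a ha
    obtain ⟨a1, a2, a3, a4, a5, a6⟩ := hz
    refine ⟨mul_mem a1 ha, ?_, ?_, ?_, a3 a ha, by rw [← mul_assoc, a6, zero_mul]⟩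
    · rw [mul_assoc, ← hpc a ha, ← mul_assoc, a2]
    · intro b hb; rw [mul_assoc z, a3 _ (mul_mem ha hb)]
    · intro b hb; rw [← mul_assoc, a4 b hb, zero_mul]
  have hcomm : ∀ a ∈ S, z * a = a * z := by
    intro a ha
    have e1 : z * a * z = z * a := (hzu _ (hzaJ a ha)).2
    have e2 := (hzu _ (hzaJ (star a) (star_mem ha))).2
    have e3 := congrArg star e2
    simp only [star_mul, star_star, hzs] at e3
    rw [← e1, ← e3]; simp only [mul_assoc]
  have hz0 : z ≠ 0 := by
    intro h
    have := (hzu q hqJ).1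
    rw [h, zero_mul] at this
    exact hq0 this.symm
  have hzp : z = p := hpmin z hzS ⟨hzz, hzs⟩ hcomm hz.2.1 hz0
  have hdz : d * z = 0 := hz.2.2.2.2.2
  rw [hzp, hd, sub_mul, hhp, hqp] at hdz
  exact hne (sub_eq_zero.mp hdz).symm

/-- Step of the Fermion sequence on the `B` side. -/
theorem fermion_step (S S' : NonUnitalStarSubalgebra ℂ E) [FiniteDimensional ℂ S']
    (hle : S ≤ S') {p p' f : E} (hf : IsMinProj S f)
    (hp' : p' ∈ S') (hpp : p' * p' = p') (hps : star p' = p') (hpc : ∀ a ∈ S', p' * a = a * p')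
    (hpmin : ∀ q ∈ S', (q * q = q ∧ star q = q) → (∀ a ∈ S', q * a = a * q) →
      q * p' = q → q ≠ 0 → q = p')
    (hq : ∃ q ∈ S', (q * q = q ∧ star q = q) ∧ q ≠ 0 ∧
          q * (p' * f) = q ∧ (p' * f) * q = q ∧ q ≠ p' * f) :
    ∃ f' w₀ w₁ : E, IsMinProj S' f' ∧ f' * p' = f' ∧ w₀ ∈ S' ∧ w₁ ∈ S' ∧ f * w₀ = w₀ ∧ f * w₁ = w₁
      ∧ star w₀ * w₀ = f' ∧ star w₁ * w₁ = f' ∧ star w₀ * w₁ = 0 ∧ star w₁ * w₀ = 0 := by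
  obtain ⟨q, hqS, ⟨hqq, hqs⟩, hq0, h1, h2, hne⟩ := hq
  have hfS' : f ∈ S' := hle hf.1
  set h := p' * f with hh
  have hfh : f * h = h := by rw [hh, hpc f hfS', ← mul_assoc, hf.2.1]
  have hhp : h * p' = h := by rw [hh, mul_assoc, ← hpc f hfS', ← mul_assoc, hpp]
  have hhs : star h = h := by rw [hh, star_mul, hf.2.2.1, hps, hpc f hfS']
  have hhh : h * h = h := by
    rw [← hfh, ← mul_assoc, mul_assoc f h f]
    have : h * f = h := by rw [hh, mul_assoc, hf.2.1]
    rw [this, hfh, hh, mul_assoc, ← mul_assoc f, ← hpc f hfS', mul_assoc, hf.2.1, ← mul_assoc, hpp]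
  obtain ⟨a, ha, hane⟩ := exists_connect S' hpmin hpc hps hqS hqq hqs hq0 hhs h1 h2 hne hhp
  set d := h - q with hd
  have hhS : h ∈ S' := mul_mem hp' hfS'
  have hdS : d ∈ S' := sub_mem hhS hqS
  have hdd : d * d = d := by rw [hd, sub_mul, mul_sub, mul_sub, hhh, h1, h2, hqq]; simp
  have hds : star d = d := by simp [hd, hhs, hqs]
  have hqd : q * d = 0 := by rw [hd, mul_sub, h1, hqq, sub_self]
  have hdq : d * q = 0 := by rw [hd, sub_mul, h2, hqq, sub_self]
  have hhd : h * d = d := by rw [hd, mul_sub, hhh, h2]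
  -- supporting projection
  set y := star (d * a * q) * (d * a * q) with hy
  have hy0 : y ≠ 0 := by
    intro h0; exact hane ((CStarRing.star_mul_self_eq_zero_iff _).1 h0)
  have hxS : d * a * q ∈ S' := mul_mem (mul_mem hdS ha) hqS
  have hyS : y ∈ S' := mul_mem (star_mem hxS) hxS
  obtain ⟨e, heS, hee, hes, he0, r, hr, hye, hey⟩ := exists_spectral_proj S' hyS (by simp [hy]) hy0
  obtain ⟨f', hf', hf1, hf2⟩ := exists_minProj_le S' heS hee hes he0
  have hqy : q * y = y := by
    have hq2 : q * (q * star (d * a)) = q * star (d * a) := by rw [← mul_assoc, hqq]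
    rw [hy, star_mul, hqs, ← mul_assoc q, hq2]
  have e1 : e = r⁻¹ • (y * e) := by rw [hye, smul_smul, inv_mul_cancel₀ hr, one_smul]
  have hqe : q * e = e := by rw [e1, mul_smul_comm, ← mul_assoc, hqy]
  have hqf : q * f' = f' := by rw [← hf1, ← mul_assoc, hqe]
  have hfq : f' * q = f' := by have := congrArg star hqf; simpa [hqs, hf'.2.2.1] using this
  have hxf : d * a * q * f' ≠ 0 := by
    intro h0
    have : y * f' = 0 := by rw [hy, mul_assoc, h0, mul_zero]
    rw [← hf1, ← mul_assoc, hye, smul_mul_assoc, hf1] at this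
    rcases smul_eq_zero.mp this with h | h
    · exact hr h
    · exact hf'.2.2.2.1 h
  obtain ⟨c, hc⟩ := exists_pisom S' hf' hxS hxf
  set w := c • (d * a * q * f') with hw
  have hdw : d * w = w := by rw [hw, mul_smul_comm, ← mul_assoc, ← mul_assoc, ← mul_assoc, hdd]
  have hfw : star f' * w = 0 := by
    rw [hf'.2.2.1, ← hfq, ← hdw, mul_assoc, ← mul_assoc q, hqd, zero_mul, mul_zero]
  refine ⟨f', f', w, hf', ?_, hf'.1, SMulMemClass.smul_mem _ (mul_mem hxS hf'.1), ?_, ?_, ?_, hc, hfw, ?_⟩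
  · have : q * p' = q := by rw [← h1, mul_assoc, hhp]
    rw [← hfq, mul_assoc, this]
  · rw [← hqf, ← h2, ← mul_assoc, ← mul_assoc, hfh]
  · rw [← hdw, ← hhd, ← mul_assoc, ← mul_assoc, hfh]
  · rw [hf'.2.2.1, hf'.2.1]
  · have := congrArg star hfw; simpa using this

/-- The data extracted from the Fermion property. -/
def FermionSeq (S : ℕ → NonUnitalStarSubalgebra ℂ E) (f : ℕ → E) : Prop :=
  (∀ l, IsMinProj (S l) (f l)) ∧ ∀ l, ∃ w₀ ∈ S (l + 1), ∃ w₁ ∈ S (l + 1),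
    f l * w₀ = w₀ ∧ f l * w₁ = w₁ ∧ star w₀ * w₀ = f (l + 1) ∧ star w₁ * w₁ = f (l + 1) ∧
    star w₀ * w₁ = 0 ∧ star w₁ * w₀ = 0

theorem exists_fermionSeq (S : ℕ → NonUnitalStarSubalgebra ℂ E) (hS : IsAFPresentation E S)
    (h : HasFermionProperty E S) :
    ∃ (n : ℕ → ℕ) (f : ℕ → E), StrictMono n ∧ FermionSeq (fun l => S (n l)) f := by
  obtain ⟨n, p, hn, hpS, hpp, hp0, hpc, hpmin, hmult⟩ := h
  obtain ⟨hmono, hfd, -⟩ := hS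
  have := hfd
  have hstart : ∃ f, IsMinProj (S (n 0)) f ∧ f * p 0 = f := by
    obtain ⟨e, he, -, h2⟩ := exists_minProj_le (S (n 0)) (hpS 0) (hpp 0).1 (hpp 0).2 (hp0 0)
    exact ⟨e, he, h2⟩
  have hstep : ∀ l (f : {f // IsMinProj (S (n l)) f ∧ f * p l = f}),
      ∃ f' : {f // IsMinProj (S (n (l + 1))) f ∧ f * p (l + 1) = f},
        ∃ w₀ ∈ S (n (l + 1)), ∃ w₁ ∈ S (n (l + 1)),
        f.1 * w₀ = w₀ ∧ f.1 * w₁ = w₁ ∧ star w₀ * w₀ = f'.1 ∧ star w₁ * w₁ = f'.1 ∧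
        star w₀ * w₁ = 0 ∧ star w₁ * w₀ = 0 := by
    rintro l ⟨f, hf, hfp⟩
    obtain ⟨f', w₀, w₁, a1, a2, a3, a4, a5, a6, a7, a8, a9, a10⟩ := fermion_step (S (n l)) (S (n (l + 1)))
      (hmono (hn.monotone (Nat.le_succ l))) (p := p l) hf (hpS (l + 1)) (hpp _).1 (hpp _).2 (hpc _) (hpmin _)
      (hmult l f hf.1 ⟨hf.2.1, hf.2.2.1⟩ hf.2.2.2.1 hfp hf.2.2.2.2).2
    exact ⟨⟨f', a1, a2⟩, w₀, a3, w₁, a4, a5, a6, a7, a8, a9, a10⟩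
  choose F hF using hstep
  let f : ∀ l, {f // IsMinProj (S (n l)) f ∧ f * p l = f} :=
    fun l => Nat.rec ⟨hstart.choose, hstart.choose_spec⟩ (fun l f => F l f) l
  exact ⟨n, fun l => (f l).1, hn, fun l => (f l).2.1, fun l => hF l (f l)⟩

theorem FermionSeq.many {S : ℕ → NonUnitalStarSubalgebra ℂ E} (hS : Monotone S) {f : ℕ → E}
    (h : FermionSeq S f) (l : ℕ) (N : ℕ) :
    ∃ l', l < l' ∧ ∃ w : ℕ → E, (∀ t, w t ∈ S l') ∧ (∀ t, f l * w t = w t) ∧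
      ∀ s t, s < N + 1 → t < N + 1 → star (w s) * w t = if s = t then f l' else 0 := by
  classical
  induction N with
  | zero =>
    obtain ⟨w₀, h0, w₁, h1, a1, a2, a3, a4, a5, a6⟩ := h.2 l
    refine ⟨l + 1, Nat.lt_succ_self l, fun _ => w₀, fun _ => h0, fun _ => a1, ?_⟩
    intro s t hs ht
    have : s = t := by omega
    simp [this, a3]
  | succ N ih =>
    obtain ⟨l', hl, w, hw1, hw2, hw3⟩ := ih
    obtain ⟨w₀, h0, w₁, h1, a1, a2, a3, a4, a5, a6⟩ := h.2 l'
    have hSl := hS (Nat.le_succ l')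
    refine ⟨l' + 1, by omega, fun t => if t < N + 1 then w t * w₀ else w 0 * w₁, ?_, ?_, ?_⟩
    · intro t
      dsimp only
      split_ifs
      · exact mul_mem (hSl (hw1 t)) h0
      · exact mul_mem (hSl (hw1 0)) h1
    · intro t
      dsimp only
      split_ifs
      · rw [← mul_assoc, hw2]
      · rw [← mul_assoc, hw2]
    · intro s t hs ht
      have key : ∀ i j, i < N + 1 → j < N + 1 → ∀ u v, f l' * v = v →
          star (w i * u) * (w j * v) = if i = j then star u * v else 0 := by
        intro i j hi hj u v hv
        rw [star_mul, mul_assoc, ← mul_assoc (star (w i)), hw3 i j hi hj]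
        split_ifs
        · rw [hv]
        · simp
      dsimp only
      by_cases c1 : s < N + 1 <;> by_cases c2 : t < N + 1
      · rw [if_pos c1, if_pos c2, key s t c1 c2 _ _ a1, a3]
      · have : s ≠ t := by omega
        rw [if_pos c1, if_neg c2, key s 0 c1 (by omega) _ _ a2, a5]
        simp [this]
      · have : s ≠ t := by omega
        rw [if_neg c1, if_pos c2, key 0 t (by omega) c2 _ _ a1, a6]
        simp [this]
      · have : s = t := by omega
        rw [if_neg c1, if_neg c2, key 0 0 (by omega) (by omega) _ _ a2, a4]
        simp [this]

end FD2



section Systems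

variable {E : Type*} [NonUnitalCStarAlgebra E] {F : Type*} [NonUnitalCStarAlgebra F]

theorem norm_orth_add {x z : E} {C : ℝ} (hx : ‖x‖ ≤ C) (hz : ‖z‖ ≤ C)
    (h1 : star x * z = 0) (h2 : x * star z = 0) : ‖x + z‖ ≤ C := by
  have h1' : star z * x = 0 := by have := congrArg star h1; simpa using this
  have hC : 0 ≤ C := (norm_nonneg x).trans hx
  have e1 : ‖x + z‖ * ‖x + z‖ = ‖star x * x + star z * z‖ := by
    rw [← CStarRing.norm_star_mul_self, star_add, add_mul, mul_add, mul_add, h1, h1']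
    simp
  have e2 : ‖star x * x + star z * z‖ = max ‖star x * x‖ ‖star z * z‖ := by
    apply IsSelfAdjoint.norm_add_eq_max
    · exact IsSelfAdjoint.star_mul_self x
    · exact IsSelfAdjoint.star_mul_self z
    · rw [mul_assoc, ← mul_assoc x, h2, zero_mul, mul_zero]
  rw [e2, CStarRing.norm_star_mul_self, CStarRing.norm_star_mul_self] at e1
  have : ‖x + z‖ * ‖x + z‖ ≤ C * C := by
    rw [e1]
    exact max_le (mul_self_le_mul_self (norm_nonneg _) hx) (mul_self_le_mul_self (norm_nonneg _) hz)
  exact abs_le_of_sq_le_sq' (by nlinarith) hC |>.2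

theorem norm_orth_sum {ι : Type*} (s : Finset ι) (Z : ι → E) {C : ℝ} (hC : 0 ≤ C)
    (hZ : ∀ i ∈ s, ‖Z i‖ ≤ C)
    (h1 : ∀ i j, i ≠ j → star (Z i) * Z j = 0)
    (h2 : ∀ i j, i ≠ j → Z i * star (Z j) = 0) : ‖∑ i ∈ s, Z i‖ ≤ C := by
  classical
  induction s using Finset.induction_on with
  | empty => simpa using hC
  | insert i s hi ih =>
    rw [Finset.sum_insert hi]
    apply norm_orth_add (hZ i (Finset.mem_insert_self i s))
      (ih fun j hj => hZ j (Finset.mem_insert_of_mem hj))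
    · rw [Finset.mul_sum]
      exact Finset.sum_eq_zero fun j hj => h1 i j (fun h => hi (h ▸ hj))
    · rw [star_sum, Finset.mul_sum]
      exact Finset.sum_eq_zero fun j hj => h2 i j (fun h => hi (h ▸ hj))

/-- The representation of a matrix algebra given by a family of partial isometries. -/
noncomputable def rep {X : Type*} [Fintype X] [DecidableEq X] (u : X → E) (g : E)
    (hu : ∀ a b, star (u a) * u b = if a = b then g else 0) (hg : ∀ a, u a * g = u a) :
    CStarMatrix X X ℂ →⋆ₙₐ[ℂ] E where
  toFun m := ∑ a, ∑ b, m a b • (u a * star (u b))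
  map_smul' c m := by
    simp only [Finset.smul_sum, smul_smul]
    rfl
  map_zero' := by simp
  map_add' m m' := by
    simp only [CStarMatrix.add_apply, add_smul, Finset.sum_add_distrib]
  map_mul' m m' := by
    have key : ∀ a b c d, u a * star (u b) * (u c * star (u d)) =
        if b = c then u a * star (u d) else 0 := by
      intro a b c d
      rw [mul_assoc, ← mul_assoc (star (u b)), hu]
      split_ifs
      · rw [← mul_assoc, hg]
      · simp
    simp only [Finset.sum_mul, Finset.mul_sum, smul_mul_smul_comm, key, CStarMatrix.mul_apply,
      Finset.sum_smul]
    have cyc : ∀ f : X → X → X → E, ∑ a, ∑ d, ∑ c, f a d c = ∑ c, ∑ d, ∑ a, f a d c := by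
      intro f
      rw [Finset.sum_comm]
      conv_rhs => rw [Finset.sum_comm]
      exact Finset.sum_congr rfl fun d _ => Finset.sum_comm
    rw [cyc]
    refine Finset.sum_congr rfl fun c _ => Finset.sum_congr rfl fun d _ =>
      Finset.sum_congr rfl fun a _ => ?_
    simp
  map_star' m := by
    simp only [star_sum, star_smul, star_mul, star_star, CStarMatrix.star_apply]
    rw [Finset.sum_comm]

theorem rep_apply {X : Type*} [Fintype X] [DecidableEq X] (u : X → E) (g : E)
    (hu : ∀ a b, star (u a) * u b = if a = b then g else 0) (hg : ∀ a, u a * g = u a)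
    (m : CStarMatrix X X ℂ) : rep u g hu hg m = ∑ a, ∑ b, m a b • (u a * star (u b)) := rfl

theorem rep_norm {X : Type*} [Fintype X] [DecidableEq X] (u : X → E) (g : E)
    (hu : ∀ a b, star (u a) * u b = if a = b then g else 0) (hg : ∀ a, u a * g = u a)
    (g0 : g ≠ 0) (gg : g * g = g) (m : CStarMatrix X X ℂ) : ‖rep u g hu hg m‖ = ‖m‖ := by
  apply NonUnitalStarAlgHom.norm_map
  rw [injective_iff_map_eq_zero]
  intro m hm
  ext a b
  have hgs : ∀ a, g * star (u a) * u a = g := by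
    intro a
    rw [mul_assoc, hu, if_pos rfl, gg]
  have h1 : star (u a) * rep u g hu hg m * u b = m a b • g := by
    rw [rep_apply]
    simp only [Finset.mul_sum, Finset.sum_mul, mul_smul_comm, smul_mul_assoc]
    rw [Finset.sum_eq_single a, Finset.sum_eq_single b]
    · rw [← mul_assoc, hu, if_pos rfl, hgs]
    · intro c _ hc
      rw [← mul_assoc, mul_assoc _ _ (u b), hu c b, if_neg hc, mul_zero]
      exact smul_zero _
    · simp
    · intro c _ hc
      refine Finset.sum_eq_zero fun d _ => ?_
      rw [← mul_assoc, hu, if_neg hc.symm]; simp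
    · simp
  rw [hm, mul_zero, zero_mul] at h1
  exact (smul_eq_zero.mp h1.symm).resolve_right g0

/-- A system of partial isometries in `S`, in blocks. -/
structure IsSys (S : NonUnitalStarSubalgebra ℂ E) {K I : Type} [DecidableEq K] (blk : K → I)
    (v : K → E) (g : I → E) (Φ : I → E →ₗ[ℂ] ℂ) : Prop where
  v_mem : ∀ a, v a ∈ S
  g_ne : ∀ i, g i ≠ 0
  g_mul : ∀ i, g i * g i = g i
  g_star : ∀ i, star (g i) = g i
  v_g : ∀ a, v a * g (blk a) = v a
  orth : ∀ a b, star (v a) * v b = if a = b then g (blk a) else 0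
  comp : ∀ i, ∀ s ∈ S, g i * s * g i = Φ i s • g i

namespace IsSys

variable {S : NonUnitalStarSubalgebra ℂ E} {K I : Type} [DecidableEq K] {blk : K → I}
    {v : K → E} {g : I → E} {Φ : I → E →ₗ[ℂ] ℂ}

theorem g_v (h : IsSys S blk v g Φ) (a : K) : g (blk a) * star (v a) = star (v a) := by
  have := congrArg star (h.v_g a)
  simpa [h.g_star] using this

theorem sand (h : IsSys S blk v g Φ) (a b : K) (hab : blk a = blk b) {s : E} (hs : s ∈ S) :
    star (v a) * s * v b = Φ (blk a) (star (v a) * s * v b) • g (blk a) := by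
  rw [← h.comp (blk a) _ (mul_mem (mul_mem (star_mem (h.v_mem a)) hs) (h.v_mem b))]
  rw [← mul_assoc, ← mul_assoc, h.g_v, hab, mul_assoc _ (v b), h.v_g]

theorem Φ_g (h : IsSys S blk v g Φ) (i : I) (hg : g i ∈ S) : Φ i (g i) = 1 := by
  have := h.comp i _ hg
  rw [h.g_mul, h.g_mul] at this
  have h2 : (1 - Φ i (g i)) • g i = 0 := by rw [sub_smul, one_smul, ← this, sub_self]
  have := (smul_eq_zero.mp h2).resolve_right (h.g_ne i)
  exact (sub_eq_zero.mp this).symm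

theorem eq_coef (h : IsSys S blk v g Φ) (a b : K) (hab : blk a = blk b) {s : E} (hs : s ∈ S)
    {c : ℂ} (hc : star (v a) * s * v b = c • g (blk a)) : Φ (blk a) (star (v a) * s * v b) = c := by
  rw [h.sand a b hab hs] at hc
  have h2 : (Φ (blk a) (star (v a) * s * v b) - c) • g (blk a) = 0 := by
    rw [sub_smul, hc, sub_self]
  exact sub_eq_zero.mp ((smul_eq_zero.mp h2).resolve_right (h.g_ne _))

end IsSys

/-- matrix coefficient -/
noncomputable def coef {K I : Type} (blk : K → I)
    (v : K → E) (Φ : I → E →ₗ[ℂ] ℂ) (a b : K) : E →ₗ[ℂ] ℂ :=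
  (Φ (blk a)) ∘ₗ (LinearMap.mulRight ℂ (v b)) ∘ₗ (LinearMap.mulLeft ℂ (star (v a)))

@[simp] theorem coef_apply {K I : Type} (blk : K → I)
    (v : K → E) (Φ : I → E →ₗ[ℂ] ℂ) (a b : K) (s : E) :
    coef blk v Φ a b s = Φ (blk a) (star (v a) * s * v b) := rfl

/-- the transfer map between two systems -/
noncomputable def Del {K I : Type} [Fintype K] [DecidableEq I] (blk : K → I)
    (v : K → E) (Φ : I → E →ₗ[ℂ] ℂ) (v' : K → F) : E →ₗ[ℂ] F :=
  ∑ a, ∑ b, if blk a = blk b then (coef blk v Φ a b).smulRight (v' a * star (v' b)) else 0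

theorem Del_apply {K I : Type} [Fintype K] [DecidableEq I] (blk : K → I)
    (v : K → E) (Φ : I → E →ₗ[ℂ] ℂ) (v' : K → F) (s : E) :
    Del blk v Φ v' s = ∑ a, ∑ b, if blk a = blk b then
      coef blk v Φ a b s • (v' a * star (v' b)) else 0 := by
  simp only [Del, LinearMap.sum_apply]
  refine Finset.sum_congr rfl fun a _ => Finset.sum_congr rfl fun b _ => ?_
  split_ifs
  · rfl
  · rfl

theorem Del_mem {K I : Type} [Fintype K] [DecidableEq I] (blk : K → I)
    (v : K → E) (Φ : I → E →ₗ[ℂ] ℂ) (v' : K → F) (s : E) (S' : NonUnitalStarSubalgebra ℂ F)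
    (h : ∀ a, v' a ∈ S') : Del blk v Φ v' s ∈ S' := by
  rw [Del_apply]
  refine sum_mem fun a _ => sum_mem fun b _ => ?_
  split_ifs
  · exact SMulMemClass.smul_mem _ (mul_mem (h a) (star_mem (h b)))
  · exact zero_mem _

/-- left action -/
theorem star_mul_Del {K I : Type} [Fintype K] [DecidableEq K] [DecidableEq I] {blk : K → I}
    (v : K → E) (Φ : I → E →ₗ[ℂ] ℂ) {S' : NonUnitalStarSubalgebra ℂ F} {v' : K → F} {g' : I → F}
    {Φ' : I → F →ₗ[ℂ] ℂ} (h' : IsSys S' blk v' g' Φ') (s : E) (a : K) :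
    star (v' a) * Del blk v Φ v' s =
      ∑ b, if blk a = blk b then coef blk v Φ a b s • star (v' b) else 0 := by
  rw [Del_apply, Finset.mul_sum, Finset.sum_eq_single a]
  · rw [Finset.mul_sum]
    refine Finset.sum_congr rfl fun b _ => ?_
    split_ifs with hb
    · rw [mul_smul_comm, ← mul_assoc, h'.orth, if_pos rfl, hb, h'.g_v]
    · simp
  · intro c _ hc
    rw [Finset.mul_sum]
    refine Finset.sum_eq_zero fun b _ => ?_
    split_ifs with hb
    · rw [mul_smul_comm, ← mul_assoc, h'.orth, if_neg hc.symm, zero_mul, smul_zero]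
    · simp
  · simp

theorem Del_mul {K I : Type} [Fintype K] [DecidableEq K] [DecidableEq I] {blk : K → I}
    (v : K → E) (Φ : I → E →ₗ[ℂ] ℂ) {S' : NonUnitalStarSubalgebra ℂ F} {v' : K → F} {g' : I → F}
    {Φ' : I → F →ₗ[ℂ] ℂ} (h' : IsSys S' blk v' g' Φ') (s : E) (a : K) :
    Del blk v Φ v' s * v' a =
      ∑ b, if blk b = blk a then coef blk v Φ b a s • v' b else 0 := by
  rw [Del_apply, Finset.sum_mul]
  refine Finset.sum_congr rfl fun b _ => ?_
  rw [Finset.sum_mul, Finset.sum_eq_single a]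
  · split_ifs with hb
    · rw [smul_mul_assoc, mul_assoc, h'.orth, if_pos rfl, ← hb, h'.v_g]
    · simp
  · intro c _ hc
    split_ifs with hb
    · rw [smul_mul_assoc, mul_assoc, h'.orth, if_neg hc, mul_zero, smul_zero]
    · simp
  · simp

theorem Del_norm {K I : Type} [Fintype K] [DecidableEq K] [Fintype I] [DecidableEq I]
    {blk : K → I}
    {S : NonUnitalStarSubalgebra ℂ E} {v : K → E} {g : I → E} {Φ : I → E →ₗ[ℂ] ℂ}
    (h : IsSys S blk v g Φ)
    {S' : NonUnitalStarSubalgebra ℂ F} {v' : K → F} {g' : I → F}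
    {Φ' : I → F →ₗ[ℂ] ℂ} (h' : IsSys S' blk v' g' Φ') {s : E} (hs : s ∈ S) :
    ‖Del blk v Φ v' s‖ ≤ ‖s‖ := by
  let Z : I → F := fun i => ∑ a : {a // blk a = i}, ∑ b : {a // blk a = i},
    coef blk v Φ a b s • (v' a * star (v' b))
  have hsum : Del blk v Φ v' s = ∑ i, Z i := by
    rw [Del_apply, ← Fintype.sum_fiberwise (g := blk)]
    refine Finset.sum_congr rfl fun i _ => Finset.sum_congr rfl fun a _ => ?_
    rw [← Finset.sum_filter, a.2]
    exact (Finset.sum_subtype _ (by intro x; simp [eq_comm]) _)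
  rw [hsum]
  apply norm_orth_sum _ _ (norm_nonneg s)
  · intro i _
    let u : {a // blk a = i} → E := fun a => v a
    let u' : {a // blk a = i} → F := fun a => v' a
    have hu : ∀ a b, star (u a) * u b = if a = b then g i else 0 := by
      intro a b
      simp only [u, h.orth, a.2, Subtype.ext_iff]
    have hu' : ∀ a b, star (u' a) * u' b = if a = b then g' i else 0 := by
      intro a b
      simp only [u', h'.orth, a.2, Subtype.ext_iff]
    have hg : ∀ a, u a * g i = u a := by
      rintro ⟨a, rfl⟩
      exact h.v_g a
    have hg' : ∀ a, u' a * g' i = u' a := by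
      rintro ⟨a, rfl⟩
      exact h'.v_g a
    let m : CStarMatrix {a // blk a = i} {a // blk a = i} ℂ :=
      CStarMatrix.ofMatrix (Matrix.of fun a b => coef blk v Φ a b s)
    have e1 : Z i = rep u' (g' i) hu' hg' m := rfl
    rw [e1, rep_norm _ _ _ _ (h'.g_ne i) (h'.g_mul i), ← rep_norm u (g i) hu hg (h.g_ne i) (h.g_mul i)]
    set P : E := ∑ a, u a * star (u a) with hP
    have hPs : star P = P := by simp [hP, star_sum]
    have hPP : P * P = P := by
      rw [hP, Finset.sum_mul]
      refine Finset.sum_congr rfl fun a _ => ?_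
      rw [Finset.mul_sum, Finset.sum_eq_single a]
      · rw [mul_assoc, ← mul_assoc (star (u a)), hu, if_pos rfl, ← mul_assoc, hg]
      · intro b _ hb
        rw [mul_assoc, ← mul_assoc (star (u a)), hu, if_neg hb.symm]
        simp
      · simp
    have hPn : ‖P‖ ≤ 1 := IsStarProjection.norm_le P ⟨hPP, hPs⟩
    have e2 : rep u (g i) hu hg m = P * s * P := by
      rw [rep_apply, hP, Finset.sum_mul, Finset.sum_mul]
      refine Finset.sum_congr rfl fun a _ => ?_
      rw [Finset.mul_sum]
      refine Finset.sum_congr rfl fun b _ => ?_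
      have e3 : u a * star (u a) * s * (u b * star (u b)) =
          u a * (star (v a) * s * v b) * star (u b) := by
        simp only [u, mul_assoc]
      rw [e3, h.sand a b (a.2.trans b.2.symm) hs]
      rw [mul_smul_comm, smul_mul_assoc]
      have : u a * g (blk a) = u a := h.v_g a
      rw [this]; rfl
    rw [e2]
    calc ‖P * s * P‖ ≤ ‖P‖ * ‖s‖ * ‖P‖ := (norm_mul_le _ _).trans (by gcongr; exact norm_mul_le _ _)
      _ ≤ 1 * ‖s‖ * 1 := by gcongr
      _ = ‖s‖ := by ring
  · intro i j hij
    simp only [Z, star_sum, Finset.sum_mul, Finset.mul_sum]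
    refine Finset.sum_eq_zero fun a _ => Finset.sum_eq_zero fun b _ =>
      Finset.sum_eq_zero fun c _ => Finset.sum_eq_zero fun d _ => ?_
    rw [star_smul, smul_mul_smul_comm, star_mul, star_star, mul_assoc, ← mul_assoc (star _) (v' _),
      h'.orth, if_neg]
    · simp
    · intro h
      apply hij
      (have h1 := a.2; have h2 := b.2; have h3 := c.2; have h4 := d.2; grind)
  · intro i j hij
    simp only [Z, star_sum, Finset.sum_mul, Finset.mul_sum]
    refine Finset.sum_eq_zero fun a _ => Finset.sum_eq_zero fun b _ =>
      Finset.sum_eq_zero fun c _ => Finset.sum_eq_zero fun d _ => ?_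
    rw [star_smul, smul_mul_smul_comm, star_mul, star_star, mul_assoc, ← mul_assoc (star _) (v' _),
      h'.orth, if_neg]
    · simp
    · intro h
      apply hij
      have h1 := a.2; have h2 := b.2; have h3 := c.2; have h4 := d.2; grind

end Systems



section Comp

variable {E : Type*} [NonUnitalCStarAlgebra E] {F : Type*} [NonUnitalCStarAlgebra F]

theorem norm_orth_le {x z : E} (h1 : star x * z = 0) (h2 : x * star z = 0) : ‖z‖ ≤ ‖x + z‖ := by
  have h1' : star z * x = 0 := by have := congrArg star h1; simpa using this
  have e1 : ‖x + z‖ * ‖x + z‖ = ‖star x * x + star z * z‖ := by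
    rw [← CStarRing.norm_star_mul_self, star_add, add_mul, mul_add, mul_add, h1, h1']
    simp
  have e2 : ‖star x * x + star z * z‖ = max ‖star x * x‖ ‖star z * z‖ := by
    apply IsSelfAdjoint.norm_add_eq_max
    · exact IsSelfAdjoint.star_mul_self x
    · exact IsSelfAdjoint.star_mul_self z
    · rw [mul_assoc, ← mul_assoc x, h2, zero_mul, mul_zero]
  rw [e2, CStarRing.norm_star_mul_self, CStarRing.norm_star_mul_self] at e1
  have : ‖z‖ * ‖z‖ ≤ ‖x + z‖ * ‖x + z‖ := by
    rw [e1]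
    exact le_max_right _ _
  exact abs_le_of_sq_le_sq' (by nlinarith) (norm_nonneg _) |>.2

theorem pisom_mul {w p : E} (h : star w * w = p) (hp : p * p = p) (hs : star p = p) :
    w * p = w := by
  have : star (w * p - w) * (w * p - w) = 0 := by
    rw [star_sub, star_mul, hs, sub_mul, mul_sub, mul_sub, mul_assoc p, ← mul_assoc (star w), h,
      mul_assoc p, h, hp, hp]
    simp
  exact sub_eq_zero.mp ((CStarRing.star_mul_self_eq_zero_iff _).1 this)

theorem exists_functional {S : NonUnitalStarSubalgebra ℂ E} {g : E} (h : IsMinProj S g) :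
    ∃ Φ : E →ₗ[ℂ] ℂ, ∀ s ∈ S, g * s * g = Φ s • g := by
  obtain ⟨θ, hθ⟩ := SeparatingDual.exists_eq_one (R := ℂ) h.2.2.2.1
  refine ⟨θ.toLinearMap ∘ₗ (LinearMap.mulRight ℂ g) ∘ₗ (LinearMap.mulLeft ℂ g), ?_⟩
  intro s hs
  obtain ⟨c, hc⟩ := h.2.2.2.2 s hs
  simp [hc, hθ]

variable {K I T I' : Type} [Fintype K] [DecidableEq K] [DecidableEq I] [Fintype T] [DecidableEq T]
  [DecidableEq I']

abbrev PK (blk : K → I) (src : T → I) : Type := {p : K × T // blk p.1 = src p.2}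

theorem sum_PK (blk : K → I) (src : T → I) {M : Type*} [AddCommMonoid M] (h : K → T → M) :
    ∑ p : PK blk src, h p.1.1 p.1.2 = ∑ a, ∑ t, if blk a = src t then h a t else 0 := by
  rw [← Fintype.sum_prod_type' (f := fun a t => if blk a = src t then h a t else 0),
    ← Finset.sum_filter]
  exact (Finset.sum_subtype _ (by simp) (fun p : K × T => h p.1 p.2)).symm

/-- edge projection -/
noncomputable def eproj (src : T → I) (ζ : T → F) (i : I) : F :=
  ∑ t, if i = src t then ζ t * star (ζ t) else 0

theorem sum_proj (blk : K → I) (src : T → I) (u : K → F) (ζ : T → F) :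
    ∑ p : PK blk src, (u p.1.1 * ζ p.1.2) * star (u p.1.1 * ζ p.1.2) =
      ∑ a, u a * eproj src ζ (blk a) * star (u a) := by
  rw [sum_PK blk src (fun a t => (u a * ζ t) * star (u a * ζ t))]
  refine Finset.sum_congr rfl fun a _ => ?_
  simp only [eproj, Finset.mul_sum, Finset.sum_mul]
  refine Finset.sum_congr rfl fun t _ => ?_
  split_ifs
  · simp [mul_assoc]
  · simp

theorem IsSys.comp_edges {S S' : NonUnitalStarSubalgebra ℂ E} {blk : K → I} {v : K → E}
    {g : I → E} {Φ : I → E →ₗ[ℂ] ℂ} (h : IsSys S blk v g Φ) (hle : S ≤ S')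
    {src : T → I} {r : T → I'} {z : T → E} {g' : I' → E} {Φ' : I' → E →ₗ[ℂ] ℂ}
    (hz : ∀ t, z t ∈ S') (hgz : ∀ t, g (src t) * z t = z t)
    (hzo : ∀ t t', star (z t) * z t' = if t = t' then g' (r t) else 0)
    (hg' : ∀ j, IsMinProj S' (g' j)) (hΦ : ∀ j, ∀ s ∈ S', g' j * s * g' j = Φ' j s • g' j) :
    IsSys S' (fun p : PK blk src => r p.1.2) (fun p => v p.1.1 * z p.1.2) g' Φ' where
  v_mem p := mul_mem (hle (h.v_mem _)) (hz _)
  g_ne j := (hg' j).2.2.2.1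
  g_mul j := (hg' j).2.1
  g_star j := (hg' j).2.2.1
  v_g p := by
    rw [mul_assoc, pisom_mul (p := g' (r p.1.2)) _ (hg' _).2.1 (hg' _).2.2.1]
    rw [hzo, if_pos rfl]
  orth p q := by
    rw [star_mul, mul_assoc, ← mul_assoc (star (v _)), h.orth]
    obtain ⟨⟨a, t⟩, hp⟩ := p
    obtain ⟨⟨b, t'⟩, hq⟩ := q
    simp only at hp hq
    simp only [Subtype.mk.injEq, Prod.mk.injEq]
    by_cases hab : a = b
    · subst hab
      have : g (blk a) * z t' = z t' := by rw [hq, hgz]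
      simp [this, hzo]
    · simp [hab]
  comp := hΦ

theorem coef_comp {S S' : NonUnitalStarSubalgebra ℂ E} {blk : K → I} {v : K → E}
    {g : I → E} {Φ : I → E →ₗ[ℂ] ℂ} (h : IsSys S blk v g Φ) (hle : S ≤ S')
    {src : T → I} {r : T → I'} {z : T → E} {g' : I' → E} {Φ' : I' → E →ₗ[ℂ] ℂ}
    (hgz : ∀ t, g (src t) * z t = z t)
    (hzo : ∀ t t', star (z t) * z t' = if t = t' then g' (r t) else 0)
    (h' : IsSys S' (fun p : PK blk src => r p.1.2) (fun p => v p.1.1 * z p.1.2) g' Φ')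
    {s : E} (hs : s ∈ S)
    (H : ∀ a b, blk a ≠ blk b → ∃ c : ℂ, star (v a) * s * v b = c • g (blk b))
    (p q : PK blk src) (hpq : r p.1.2 = r q.1.2) :
    coef (fun p : PK blk src => r p.1.2) (fun p => v p.1.1 * z p.1.2) Φ' p q s =
      if p.1.2 = q.1.2 then coef blk v Φ p.1.1 q.1.1 s else 0 := by
  rw [coef_apply]
  apply h'.eq_coef p q hpq (hle hs)
  obtain ⟨⟨a, t⟩, hp⟩ := p
  obtain ⟨⟨b, t'⟩, hq⟩ := q
  simp only at hp hq hpq ⊢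
  have e0 : star (v a * z t) * s * (v b * z t') = star (z t) * (star (v a) * s * v b) * z t' := by
    simp only [star_mul, mul_assoc]
  have e1 : g (blk b) * z t' = z t' := by rw [hq, hgz]
  rw [e0]
  by_cases hab : blk a = blk b
  · rw [h.sand a b hab hs, hab, mul_smul_comm, smul_mul_assoc, mul_assoc (star (z t)), e1, hzo]
    split_ifs
    · rw [coef_apply, hab]
    · simp
  · obtain ⟨c, hc⟩ := H a b hab
    have : t ≠ t' := by
      rintro rfl
      exact hab (hp.trans hq.symm)
    rw [hc, mul_smul_comm, smul_mul_assoc, mul_assoc, e1, hzo]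
    simp [this]

theorem Del_comp {S S' : NonUnitalStarSubalgebra ℂ E} {blk : K → I} {v : K → E}
    {g : I → E} {Φ : I → E →ₗ[ℂ] ℂ} (h : IsSys S blk v g Φ) (hle : S ≤ S')
    {src : T → I} {r : T → I'} {z : T → E} {g' : I' → E} {Φ' : I' → E →ₗ[ℂ] ℂ}
    (hgz : ∀ t, g (src t) * z t = z t)
    (hzo : ∀ t t', star (z t) * z t' = if t = t' then g' (r t) else 0)
    (h' : IsSys S' (fun p : PK blk src => r p.1.2) (fun p => v p.1.1 * z p.1.2) g' Φ')
    {s : E} (hs : s ∈ S)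
    (H : ∀ a b, blk a ≠ blk b → ∃ c : ℂ, star (v a) * s * v b = c • g (blk b))
    (u : K → F) (ζ : T → F) :
    Del (fun p : PK blk src => r p.1.2) (fun p => v p.1.1 * z p.1.2) Φ'
      (fun p => u p.1.1 * ζ p.1.2) s =
    ∑ a, ∑ b, if blk a = blk b then
      coef blk v Φ a b s • (u a * eproj src ζ (blk a) * star (u b)) else 0 := by
  rw [Del_apply]
  have e1 : ∀ p q : PK blk src, (if r p.1.2 = r q.1.2 then
      coef (fun p : PK blk src => r p.1.2) (fun p => v p.1.1 * z p.1.2) Φ' p q s •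
        (u p.1.1 * ζ p.1.2 * star (u q.1.1 * ζ q.1.2)) else 0) =
      if p.1.2 = q.1.2 then coef blk v Φ p.1.1 q.1.1 s •
        (u p.1.1 * ζ p.1.2 * star (u q.1.1 * ζ q.1.2)) else 0 := by
    intro p q
    by_cases hpq : r p.1.2 = r q.1.2
    · rw [if_pos hpq, coef_comp h hle hgz hzo h' hs H p q hpq]
      split_ifs <;> simp
    · rw [if_neg hpq, if_neg]
      intro hh
      exact hpq (by rw [hh])
  simp only [e1]
  have e2 : ∀ a t, (∑ q : PK blk src, if t = q.1.2 then coef blk v Φ a q.1.1 s •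
        (u a * ζ t * star (u q.1.1 * ζ q.1.2)) else 0) =
      ∑ b, if blk b = src t then coef blk v Φ a b s • (u a * ζ t * star (u b * ζ t)) else 0 := by
    intro a t
    rw [sum_PK blk src (fun b t' => if t = t' then coef blk v Φ a b s •
        (u a * ζ t * star (u b * ζ t')) else 0)]
    refine Finset.sum_congr rfl fun b _ => ?_
    rw [Finset.sum_eq_single t]
    · simp
    · intro t' _ ht
      simp [ht.symm]
    · simp
  simp only [e2]
  rw [sum_PK blk src (fun a t => ∑ b, if blk b = src t then
    coef blk v Φ a b s • (u a * ζ t * star (u b * ζ t)) else 0)]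
  refine Finset.sum_congr rfl fun a _ => ?_
  have e3 : ∀ t, (if blk a = src t then ∑ b, (if blk b = src t then
    coef blk v Φ a b s • (u a * ζ t * star (u b * ζ t)) else 0) else 0) =
    ∑ b, if blk a = blk b then (if blk a = src t then
      coef blk v Φ a b s • (u a * ζ t * star (u b * ζ t)) else 0) else 0 := by
    intro t
    split_ifs with hc
    · refine Finset.sum_congr rfl fun b _ => ?_
      rw [hc]
      simp only [eq_comm]
    · simp
  simp only [e3]
  rw [Finset.sum_comm]
  refine Finset.sum_congr rfl fun b _ => ?_
  split_ifs with hc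
  · simp only [eproj, Finset.mul_sum, Finset.sum_mul, Finset.smul_sum]
    refine Finset.sum_congr rfl fun t _ => ?_
    split_ifs
    · simp [mul_assoc]
    · simp
  · simp

end Comp



section StageSec

variable {D : Type*} [CStarAlgebra D] {B : Type*} [NonUnitalCStarAlgebra B]

/-- The data at a finite stage of the construction. -/
structure Stage (C : NonUnitalStarSubalgebra ℂ D) (S : ℕ → NonUnitalStarSubalgebra ℂ B)
    (f : ℕ → B) where
  K : Type
  I : Type
  fK : Fintype K
  dK : DecidableEq K
  fI : Fintype I
  dI : DecidableEq I
  blk : K → I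
  y : K → D
  e : I → D
  ψ : I → D →ₗ[ℂ] ℂ
  l : ℕ
  v : K → B
  φ : B →ₗ[ℂ] ℂ
  γ : D →ₗ[ℂ] B
  hA : IsSys C blk y e ψ
  e_mem : ∀ i, e i ∈ C
  e_orth : ∀ i j, i ≠ j → ∀ a ∈ C, e i * a * e j = 0
  complete : ∑ a, y a * star (y a) = 1
  hB : IsSys (S l) blk v (fun _ => f l) (fun _ => φ)
  γ_mem : ∀ a ∈ C, γ a ∈ S l
  γ_norm : ∀ a ∈ C, ‖γ a‖ ≤ ‖a‖
  γ_v : ∀ a ∈ C, ∀ α, γ a * v α = ∑ β, if blk β = blk α then coef blk y ψ β α a • v β else 0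
  v_γ : ∀ a ∈ C, ∀ α,
    star (v α) * γ a = ∑ β, if blk α = blk β then coef blk y ψ α β a • star (v β) else 0

attribute [instance] Stage.fK Stage.dK Stage.fI Stage.dI

namespace Stage

variable {C C' : NonUnitalStarSubalgebra ℂ D} {S : ℕ → NonUnitalStarSubalgebra ℂ B} {f : ℕ → B}

/-- the left inverse at the stage -/
noncomputable def δ (st : Stage C S f) : B →ₗ[ℂ] D := Del st.blk st.v (fun _ => st.φ) st.y

theorem off (st : Stage C S f) (a b : st.K) (hab : st.blk a ≠ st.blk b) {s : D} (hs : s ∈ C) :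
    star (st.y a) * s * st.y b = 0 := by
  have := st.e_orth _ _ hab _ (mul_mem (mul_mem (star_mem (st.hA.v_mem a)) hs) (st.hA.v_mem b))
  rw [← mul_assoc, ← mul_assoc, st.hA.g_v, mul_assoc _ (st.y b), st.hA.v_g] at this
  exact this

theorem one_mem (st : Stage C S f) : (1 : D) ∈ C := by
  rw [← st.complete]
  exact sum_mem fun a _ => mul_mem (st.hA.v_mem a) (star_mem (st.hA.v_mem a))

theorem expand (st : Stage C S f) {s : D} (hs : s ∈ C) : Del st.blk st.y st.ψ st.y s = s := by
  have e1 : s = (∑ a, st.y a * star (st.y a)) * s * (∑ a, st.y a * star (st.y a)) := by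
    rw [st.complete]; simp
  conv_rhs => rw [e1]
  rw [Del_apply, Finset.sum_mul, Finset.sum_mul]
  refine Finset.sum_congr rfl fun a _ => ?_
  rw [Finset.mul_sum]
  refine Finset.sum_congr rfl fun b _ => ?_
  have e2 : st.y a * star (st.y a) * s * (st.y b * star (st.y b)) =
      st.y a * (star (st.y a) * s * st.y b) * star (st.y b) := by simp only [mul_assoc]
  rw [e2]
  split_ifs with h
  · rw [st.hA.sand a b h hs, mul_smul_comm, smul_mul_assoc, st.hA.v_g, coef_apply]
  · rw [st.off a b h hs]; simp

theorem δ_γ (st : Stage C S f) {a : D} (ha : a ∈ C) : st.δ (st.γ a) = a := by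
  conv_rhs => rw [← st.expand ha]
  rw [δ, Del_apply, Del_apply]
  refine Finset.sum_congr rfl fun α _ => Finset.sum_congr rfl fun β _ => ?_
  split_ifs with h
  · congr 1
    rw [coef_apply]
    apply st.hB.eq_coef α β h (st.γ_mem a ha)
    rw [st.v_γ a ha, Finset.sum_mul, Finset.sum_eq_single β]
    · rw [if_pos h, smul_mul_assoc, st.hB.orth, if_pos rfl]
    · intro c _ hc
      split_ifs
      · rw [smul_mul_assoc, st.hB.orth, if_neg hc, smul_zero]
      · simp
    · simp
  · rfl

theorem δ_norm (st : Stage C S f) {b : B} (hb : b ∈ S st.l) : ‖st.δ b‖ ≤ ‖b‖ :=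
  Del_norm st.hB st.hA hb

/-- The next stage, from edges. -/
theorem step_aux (st : Stage C S f) (hle : C ≤ C') (hSm : Monotone S)
    (l' : ℕ) (hl : st.l < l') (hf : IsMinProj (S l') (f l'))
    (φ' : B →ₗ[ℂ] ℂ) (hφ : ∀ s ∈ S l', f l' * s * f l' = φ' s • f l')
    {T I' : Type} [Fintype T] [DecidableEq T] [Fintype I'] [DecidableEq I']
    (src : T → st.I) (r : T → I') (x : T → D) (w : T → B) (e' : I' → D)
    (ψ' : I' → D →ₗ[ℂ] ℂ)
    (he' : ∀ j, IsMinProj C' (e' j)) (hψ : ∀ j, ∀ s ∈ C', e' j * s * e' j = ψ' j s • e' j)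
    (heo : ∀ i j, i ≠ j → ∀ a ∈ C', e' i * a * e' j = 0)
    (hx : ∀ t, x t ∈ C') (hex : ∀ t, st.e (src t) * x t = x t)
    (hxo : ∀ t t', star (x t) * x t' = if t = t' then e' (r t) else 0)
    (hxs : ∀ i, eproj src x i = st.e i)
    (hw : ∀ t, w t ∈ S l') (hfw : ∀ t, f st.l * w t = w t)
    (hwo : ∀ t t', star (w t) * w t' = if t = t' then f l' else 0) :
    ∃ st' : Stage C' S f, st.l < st'.l ∧ (∀ a ∈ C, st'.γ a = st.γ a) ∧
      ∀ b ∈ S st.l, st'.δ b = st.δ b := by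
  have hSl : S st.l ≤ S l' := hSm hl.le
  -- the two new systems
  have hA' := st.hA.comp_edges hle (r := r) hx hex hxo he' hψ
  have hB' := st.hB.comp_edges hSl (src := src) (r := r) (g' := fun _ => f l')
    (Φ' := fun _ => φ') hw hfw hwo (fun _ => hf) (fun _ => hφ)
  set y' : PK st.blk src → D := fun p => st.y p.1.1 * x p.1.2 with hy'
  set v' : PK st.blk src → B := fun p => st.v p.1.1 * w p.1.2 with hv'
  set blk' : PK st.blk src → I' := fun p => r p.1.2 with hblk'
  have hch : ∀ i, ∃ t, src t = i := by
    intro i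
    by_contra hcon
    push Not at hcon
    apply st.hA.g_ne i
    rw [← hxs i, eproj]
    exact Finset.sum_eq_zero fun t _ => if_neg (hcon t).symm
  choose τ hτ using hch
  let y₀ : st.K → D := fun α => st.y α * x (τ (st.blk α))
  have hE : IsSys C' st.blk y₀ (fun i => e' (r (τ i))) (fun i => ψ' (r (τ i))) := by
    refine ⟨fun α => mul_mem (hle (st.hA.v_mem α)) (hx _), fun i => (he' _).2.2.2.1,
      fun i => (he' _).2.1, fun i => (he' _).2.2.1, ?_, ?_, fun i => hψ _⟩
    · intro α
      exact hA'.v_g ⟨(α, τ (st.blk α)), (hτ _).symm⟩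
    · intro α β
      have := hA'.orth ⟨(α, τ (st.blk α)), (hτ _).symm⟩ ⟨(β, τ (st.blk β)), (hτ _).symm⟩
      refine this.trans ?_
      refine if_congr ?_ rfl rfl
      simp only [Subtype.mk.injEq, Prod.mk.injEq]
      exact ⟨fun h => h.1, fun h => ⟨h, by rw [h]⟩⟩
  let Ek : D →ₗ[ℂ] D := Del st.blk y₀ (fun i => ψ' (r (τ i))) st.y
  have hEn : ∀ a ∈ C', ‖Ek a‖ ≤ ‖a‖ := fun a ha => Del_norm hE st.hA ha
  have hEm : ∀ a, Ek a ∈ C := fun a => Del_mem _ _ _ _ _ _ st.hA.v_mem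
  have hEid : ∀ a ∈ C, Ek a = a := by
    intro a ha
    conv_rhs => rw [← st.expand ha]
    simp only [Ek, Del_apply]
    refine Finset.sum_congr rfl fun α _ => Finset.sum_congr rfl fun β _ => ?_
    split_ifs with h
    · congr 1
      rw [coef_apply]
      apply hE.eq_coef α β h (hle ha)
      have e0 : star (y₀ α) * a * y₀ β = star (x (τ (st.blk α))) *
          (star (st.y α) * a * st.y β) * x (τ (st.blk β)) := by
        simp only [y₀, star_mul, mul_assoc]
      have e1 : st.e (st.blk α) * x (τ (st.blk β)) = x (τ (st.blk β)) := by
        have := hex (τ (st.blk β))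
        rw [hτ] at this
        rwa [h]
      rw [e0, st.hA.sand α β h ha, mul_smul_comm, smul_mul_assoc,
        mul_assoc (star (x (τ (st.blk α)))), e1, hxo, h, if_pos rfl, coef_apply, h]
    · rfl
  let ρ : D →ₗ[ℂ] B := Del blk' y' ψ' v'
  let F' : B := ∑ p, v' p * star (v' p)
  have hF'1 : F' = ∑ α, st.v α * eproj src w (st.blk α) * star (st.v α) := sum_proj _ _ _ _
  have hρ : ∀ a ∈ C, ρ a = ∑ α, ∑ β, if st.blk α = st.blk β then
      coef st.blk st.y st.ψ α β a •
        (st.v α * eproj src w (st.blk α) * star (st.v β)) else 0 := by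
    intro a ha
    exact Del_comp st.hA hle hex hxo hA' ha
      (fun α β h => ⟨0, by rw [st.off α β h ha, zero_smul]⟩) st.v w
  have hFγ : ∀ a ∈ C, F' * st.γ a = ρ a := by
    intro a ha
    rw [hρ a ha, hF'1, Finset.sum_mul]
    refine Finset.sum_congr rfl fun α _ => ?_
    rw [mul_assoc, st.v_γ a ha, Finset.mul_sum]
    refine Finset.sum_congr rfl fun β _ => ?_
    split_ifs
    · rw [mul_smul_comm]
    · simp
  have hγF : ∀ a ∈ C, st.γ a * F' = ρ a := by
    intro a ha
    rw [hρ a ha, hF'1, Finset.mul_sum, Finset.sum_comm]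
    refine Finset.sum_congr rfl fun α _ => ?_
    rw [← mul_assoc, ← mul_assoc, st.γ_v a ha, Finset.sum_mul, Finset.sum_mul]
    refine Finset.sum_congr rfl fun β _ => ?_
    split_ifs with h
    · rw [smul_mul_assoc, smul_mul_assoc, h]
    · simp
  have hvF : ∀ p, star (v' p) * F' = star (v' p) := by
    intro p
    simp only [F']
    rw [Finset.mul_sum, Finset.sum_eq_single p]
    · rw [← mul_assoc, hB'.orth, if_pos rfl, hB'.g_v]
    · intro q _ hq
      rw [← mul_assoc, hB'.orth, if_neg hq.symm, zero_mul]
    · simp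
  have hFs : star F' = F' := by simp [F', star_sum]
  have hFv : ∀ p, F' * v' p = v' p := by
    intro p
    have := congrArg star (hvF p)
    simpa [hFs] using this
  have hFF : F' * F' = F' := by
    conv_lhs => enter [2]; simp only [F']
    rw [Finset.mul_sum]
    refine Finset.sum_congr rfl fun p _ => ?_
    rw [← mul_assoc, hFv]
  have hFm : F' ∈ S l' := sum_mem fun p _ => mul_mem (hB'.v_mem p) (star_mem (hB'.v_mem p))
  let ζ : D →ₗ[ℂ] B := (st.γ ∘ₗ Ek) - (LinearMap.mulLeft ℂ F') ∘ₗ (st.γ ∘ₗ Ek)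
  have hζ : ∀ a, ζ a = st.γ (Ek a) - F' * st.γ (Ek a) := fun a => rfl
  have hcomm : ∀ a ∈ C, F' * st.γ a = st.γ a * F' := fun a ha => (hFγ a ha).trans (hγF a ha).symm
  have hvζ : ∀ a p, star (v' p) * ζ a = 0 := by
    intro a p
    rw [hζ, mul_sub, ← mul_assoc, hvF, sub_self]
  have hζv : ∀ a p, ζ a * v' p = 0 := by
    intro a p
    rw [hζ, hcomm _ (hEm a), sub_mul, mul_assoc, hFv, sub_self]
  have hFζ : ∀ a, F' * ζ a = 0 := by
    intro a
    rw [hζ, mul_sub, ← mul_assoc, hFF, sub_self]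
  have hζF : ∀ a, ζ a * F' = 0 := by
    intro a
    rw [hζ, hcomm _ (hEm a), sub_mul, mul_assoc, hFF, sub_self]
  have hζn : ∀ a ∈ C', ‖ζ a‖ ≤ ‖a‖ := by
    intro a ha
    have h1 : ‖ζ a‖ ≤ ‖F' * st.γ (Ek a) + ζ a‖ := by
      apply norm_orth_le
      · rw [star_mul, hFs, mul_assoc, hFζ, mul_zero]
      · have := congrArg star (hζF a)
        rw [star_mul, hFs, star_zero] at this
        rw [hcomm _ (hEm a), mul_assoc, this, mul_zero]
    have h2 : F' * st.γ (Ek a) + ζ a = st.γ (Ek a) := by rw [hζ]; abel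
    rw [h2] at h1
    exact h1.trans ((st.γ_norm _ (hEm a)).trans (hEn a ha))
  have hρF : ∀ a, ρ a = F' * ρ a := by
    intro a
    simp only [ρ, Del_apply, Finset.mul_sum]
    refine Finset.sum_congr rfl fun p _ => Finset.sum_congr rfl fun q _ => ?_
    split_ifs
    · rw [mul_smul_comm, ← mul_assoc, hFv]
    · simp
  have hFρ : ∀ a, ρ a = ρ a * F' := by
    intro a
    simp only [ρ, Del_apply, Finset.sum_mul]
    refine Finset.sum_congr rfl fun p _ => Finset.sum_congr rfl fun q _ => ?_
    split_ifs
    · rw [smul_mul_assoc, mul_assoc (v' p), hvF]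
    · simp
  let st' : Stage C' S f :=
    { K := PK st.blk src
      I := I'
      fK := inferInstance
      dK := inferInstance
      fI := inferInstance
      dI := inferInstance
      blk := blk'
      y := y'
      e := e'
      ψ := ψ'
      l := l'
      v := v'
      φ := φ'
      γ := ρ + ζ
      hA := hA'
      e_mem := fun j => (he' j).1
      e_orth := heo
      complete := by
        rw [hy', sum_proj st.blk src st.y x, ← st.complete]
        refine Finset.sum_congr rfl fun α _ => ?_
        rw [hxs, st.hA.v_g]
      hB := hB'
      γ_mem := by
        intro a ha
        have h1 := hSl (st.γ_mem _ (hEm a))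
        exact add_mem (Del_mem _ _ _ _ _ _ hB'.v_mem) (sub_mem h1 (mul_mem hFm h1))
      γ_norm := by
        intro a ha
        apply norm_orth_add (Del_norm hA' hB' ha) (hζn a ha)
        · change star (ρ a) * ζ a = 0
          rw [hρF a, star_mul, hFs, mul_assoc, hFζ, mul_zero]
        · change ρ a * star (ζ a) = 0
          have := congrArg star (hζF a)
          rw [star_mul, hFs, star_zero] at this
          rw [hFρ a, mul_assoc, this, mul_zero]
      γ_v := by
        intro a ha p
        rw [LinearMap.add_apply, add_mul, hζv, add_zero]
        exact Del_mul y' ψ' hB' a p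
      v_γ := by
        intro a ha p
        rw [LinearMap.add_apply, mul_add, hvζ, add_zero]
        exact star_mul_Del y' ψ' hB' a p }
  refine ⟨st', hl, ?_, ?_⟩
  · intro a ha
    change ρ a + ζ a = st.γ a
    rw [hζ, hEid a ha, hFγ a ha]; abel
  · intro b hb
    have h1 := Del_comp (r := r) (g' := fun _ => f l') (Φ' := fun _ => φ')
      st.hB hSl hfw hwo hB' hb (fun α β _ => by
      refine ⟨st.φ (star (st.v α) * b * st.v β), ?_⟩
      rw [← st.hB.comp (st.blk β) _ (mul_mem (mul_mem (star_mem (st.hB.v_mem α)) hb)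
        (st.hB.v_mem β))]
      have h2 := st.hB.g_v α
      have h3 := st.hB.v_g β
      rw [← mul_assoc, ← mul_assoc, h2, mul_assoc _ (st.v β), h3]) st.y x
    refine h1.trans ?_
    rw [δ, Del_apply]
    refine Finset.sum_congr rfl fun α _ => Finset.sum_congr rfl fun β _ => ?_
    split_ifs
    · rw [hxs, st.hA.v_g]
    · rfl

end Stage

end StageSec



section Tower

variable {D : Type*} [CStarAlgebra D] {B : Type*} [NonUnitalCStarAlgebra B]

theorem Stage.step {C C' : NonUnitalStarSubalgebra ℂ D} {S : ℕ → NonUnitalStarSubalgebra ℂ B}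
    {f : ℕ → B} [FiniteDimensional ℂ C'] (st : Stage C S f) (hle : C ≤ C') (hSm : Monotone S)
    (hF : FermionSeq S f) :
    ∃ st' : Stage C' S f, st.l < st'.l ∧ (∀ a ∈ C, st'.γ a = st.γ a) ∧
      ∀ b ∈ S st.l, st'.δ b = st.δ b := by
  classical
  obtain ⟨s, h1, h2, h3⟩ := exists_reps C'
  have hdec := fun i => exists_decomp C' s h1 h3 _ (st.e i) (hle (st.e_mem i)) (st.hA.g_mul i)
    (st.hA.g_star i) rfl
  choose m r x hx hxr hxo hxs using hdec
  let T : Type := Σ i : st.I, Fin (m i)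
  obtain ⟨l', hl, w, hw, hfw, hwo⟩ := hF.many hSm st.l (Fintype.card T)
  obtain ⟨φ', hφ⟩ := exists_functional (hF.1 l')
  let e' : Fin s.card → D := fun j => (s.equivFin.symm j : D)
  have he' : ∀ j, IsMinProj C' (e' j) := fun j => h1 _ (s.equivFin.symm j).2
  choose ψ' hψ using fun j => exists_functional (he' j)
  have hex : ∀ i t, st.e i * x i t = x i t := by
    intro i t
    rw [← hxs i, Finset.sum_mul, Finset.sum_eq_single t]
    · rw [mul_assoc, hxo, if_pos rfl, hxr]
    · intro b _ hb
      rw [mul_assoc, hxo, if_neg hb, mul_zero]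
    · simp
  have hxe : ∀ i t, star (x i t) * st.e i = star (x i t) := by
    intro i t
    have := congrArg star (hex i t)
    simpa [st.hA.g_star] using this
  have hee : ∀ i j, i ≠ j → st.e i * st.e j = 0 := by
    intro i j hij
    simpa using st.e_orth i j hij 1 st.one_mem
  have hr : ∀ i t, e' (s.equivFin (r i t)) = r i t := by
    intro i t
    simp [e']
  let ε := Fintype.equivFin T
  refine st.step_aux hle hSm l' hl (hF.1 l') φ' hφ (T := T) (fun t => t.1)
    (fun t => s.equivFin (r t.1 t.2)) (fun t => x t.1 t.2) (fun t => w (ε t)) e' ψ' he' hψ ?_ ?_ ?_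
    ?_ ?_ ?_ ?_ ?_
  · intro i j hij a ha
    refine h2 _ (s.equivFin.symm i).2 _ (s.equivFin.symm j).2 ?_ a ha
    intro h
    exact hij (s.equivFin.symm.injective (Subtype.ext h))
  · exact fun t => hx _ _
  · exact fun t => hex _ _
  · rintro ⟨i, t⟩ ⟨j, t'⟩
    dsimp only
    rw [hr]
    by_cases hij : i = j
    · subst hij
      rw [hxo]
      refine if_congr ⟨fun h => by rw [h], fun h => ?_⟩ rfl rfl
      exact eq_of_heq (Sigma.mk.inj_iff.1 h).2
    · rw [← hxe i, ← hex j, mul_assoc, ← mul_assoc (st.e i), hee i j hij, if_neg]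
      · simp
      · intro h
        exact hij (congrArg Sigma.fst h)
  · intro i
    rw [eproj, Fintype.sum_sigma, Finset.sum_eq_single i]
    · simpa using hxs i
    · intro j _ hj
      exact Finset.sum_eq_zero fun t _ => if_neg hj.symm
    · simp
  · exact fun t => hw _
  · exact fun t => hfw _
  · intro t t'
    rw [hwo _ _ (by have := (ε t).2; omega) (by have := (ε t').2; omega)]
    refine if_congr ?_ rfl rfl
    rw [← Fin.ext_iff, ε.apply_eq_iff_eq]

theorem exists_stage_zero [Nontrivial D] (C : NonUnitalStarSubalgebra ℂ D)
    (S : ℕ → NonUnitalStarSubalgebra ℂ B)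
    (f : ℕ → B) (h1 : (1 : D) ∈ C) (hC : ∀ a ∈ C, ∃ c : ℂ, a = c • (1 : D))
    (hF : FermionSeq S f) : Nonempty (Stage C S f) := by
  have hmin : IsMinProj C (1 : D) := ⟨h1, by simp, by simp, one_ne_zero, by
    intro a ha
    simpa using hC a ha⟩
  obtain ⟨ψ, hψ⟩ := exists_functional hmin
  obtain ⟨φ, hφ⟩ := exists_functional (hF.1 0)
  have hf := hF.1 0
  have hψ1 : ∀ a ∈ C, a = ψ a • (1 : D) := by
    intro a ha
    simpa using hψ a ha
  refine ⟨{ K := Unit, I := Unit, fK := inferInstance, dK := inferInstance, fI := inferInstance,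
            dI := inferInstance, blk := id, y := fun _ => 1, e := fun _ => 1, ψ := fun _ => ψ,
            l := 0, v := fun _ => f 0, φ := φ, γ := ψ.smulRight (f 0), hA := ?_, e_mem := ?_,
            e_orth := ?_, complete := ?_, hB := ?_, γ_mem := ?_, γ_norm := ?_, γ_v := ?_,
            v_γ := ?_ }⟩
  · exact ⟨fun _ => h1, fun _ => one_ne_zero, fun _ => by simp, fun _ => by simp, fun _ => by simp,
      fun _ _ => by simp, fun _ => hψ⟩
  · exact fun _ => h1
  · intro i j hij
    exact absurd rfl hij
  · simp
  · exact ⟨fun _ => hf.1, fun _ => hf.2.2.2.1, fun _ => hf.2.1, fun _ => hf.2.2.1,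
      fun _ => hf.2.1, fun _ _ => by simp [hf.2.2.1, hf.2.1], fun _ => hφ⟩
  · intro a _
    exact SMulMemClass.smul_mem _ hf.1
  · intro a ha
    have h2 : ‖f 0‖ ≤ 1 := IsStarProjection.norm_le (f 0) ⟨hf.2.1, hf.2.2.1⟩
    have h3 : ‖a‖ = ‖ψ a‖ := by
      conv_lhs => rw [hψ1 a ha]
      rw [norm_smul, CStarRing.norm_one, mul_one]
    rw [LinearMap.smulRight_apply, norm_smul, h3]
    nlinarith [norm_nonneg (ψ a)]
  · intro a _ α
    simp [hf.2.1, smul_mul_assoc]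
  · intro a _ α
    simp [hf.2.1, hf.2.2.1, mul_smul_comm]

theorem exists_tower [Nontrivial D] (C : ℕ → NonUnitalStarSubalgebra ℂ D)
    (hCm : Monotone C) (hCf : ∀ k, FiniteDimensional ℂ (C k))
    (S : ℕ → NonUnitalStarSubalgebra ℂ B) (hSm : Monotone S)
    (f : ℕ → B) (h1 : (1 : D) ∈ C 0) (hC : ∀ a ∈ C 0, ∃ c : ℂ, a = c • (1 : D))
    (hF : FermionSeq S f) :
    ∃ (l : ℕ → ℕ) (γ : ℕ → D →ₗ[ℂ] B) (δ : ℕ → B →ₗ[ℂ] D), StrictMono l ∧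
      (∀ k, ∀ a ∈ C k, γ k a ∈ S (l k)) ∧ (∀ k, ∀ a ∈ C k, ‖γ k a‖ ≤ ‖a‖) ∧
      (∀ k, ∀ a ∈ C k, δ k (γ k a) = a) ∧ (∀ k, ∀ a ∈ C k, γ (k + 1) a = γ k a) ∧
      (∀ k, ∀ b ∈ S (l k), ‖δ k b‖ ≤ ‖b‖) ∧ (∀ k, ∀ b ∈ S (l k), δ (k + 1) b = δ k b) := by
  obtain ⟨st0⟩ := exists_stage_zero (C 0) S f h1 hC hF
  have hstep := fun k (st : Stage (C k) S f) => st.step (C' := C (k + 1)) (hCm (Nat.le_succ k)) hSm hF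
  choose nxt hn1 hn2 hn3 using hstep
  let st : ∀ k, Stage (C k) S f := fun k => Nat.rec st0 nxt k
  have hst : ∀ k, st (k + 1) = nxt k (st k) := fun k => rfl
  refine ⟨fun k => (st k).l, fun k => (st k).γ, fun k => (st k).δ, ?_, ?_, ?_, ?_, ?_, ?_, ?_⟩
  · exact strictMono_nat_of_lt_succ fun k => hn1 k (st k)
  · exact fun k => (st k).γ_mem
  · exact fun k => (st k).γ_norm
  · exact fun k a ha => (st k).δ_γ ha
  · exact fun k => hn2 k (st k)
  · exact fun k b hb => (st k).δ_norm hb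
  · exact fun k => hn3 k (st k)

end Tower

section Glue

variable {E F : Type*} [NormedAddCommGroup E] [NormedSpace ℂ E] [NormedAddCommGroup F]
  [NormedSpace ℂ F] [CompleteSpace F]

theorem glue (S : ℕ → Submodule ℂ E) (hS : Monotone S) (hd : Dense (⋃ k, (S k : Set E)))
    (T : ℕ → E →ₗ[ℂ] F) (hT : ∀ k, ∀ a ∈ S k, ‖T k a‖ ≤ ‖a‖)
    (hTT : ∀ k, ∀ a ∈ S k, T (k + 1) a = T k a) :
    ∃ U : E →L[ℂ] F, (∀ k, ∀ a ∈ S k, U a = T k a) ∧ ∀ a, ‖U a‖ ≤ ‖a‖ := by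
  have hT2 : ∀ k j, ∀ a ∈ S k, T (k + j) a = T k a := by
    intro k j a ha
    induction j with
    | zero => rfl
    | succ j ih => rw [← add_assoc, hTT (k + j) a (hS (Nat.le_add_right k j) ha), ih]
  have hT3 : ∀ k k', ∀ a ∈ S k, a ∈ S k' → T k a = T k' a := by
    intro k k' a ha ha'
    rcases le_total k k' with h | h
    · obtain ⟨j, rfl⟩ := Nat.exists_eq_add_of_le h
      exact (hT2 k j a ha).symm
    · obtain ⟨j, rfl⟩ := Nat.exists_eq_add_of_le h
      exact hT2 k' j a ha'
  have hmem : ∀ a, a ∈ (⨆ k, S k) ↔ ∃ k, a ∈ S k := fun a =>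
    Submodule.mem_iSup_of_directed S hS.directed_le
  have hch : ∀ a : (⨆ k, S k : Submodule ℂ E), ∃ k, (a : E) ∈ S k := fun a => (hmem a).1 a.2
  choose κ hκ using hch
  let V : (⨆ k, S k : Submodule ℂ E) →ₗ[ℂ] F :=
    { toFun := fun a => T (κ a) a
      map_add' := by
        intro a b
        let n := max (κ (a + b)) (max (κ a) (κ b))
        have i1 : κ (a + b) ≤ n := le_max_left _ _
        have i2 : κ a ≤ n := (le_max_left _ _).trans (le_max_right _ _)
        have i3 : κ b ≤ n := (le_max_right _ _).trans (le_max_right _ _)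
        rw [hT3 _ n _ (hκ (a + b)) (hS i1 (hκ _)), hT3 _ n _ (hκ a) (hS i2 (hκ _)),
          hT3 _ n _ (hκ b) (hS i3 (hκ _))]
        simp
      map_smul' := by
        intro c a
        let n := max (κ (c • a)) (κ a)
        have i1 : κ (c • a) ≤ n := le_max_left _ _
        have i2 : κ a ≤ n := le_max_right _ _
        rw [hT3 _ n _ (hκ (c • a)) (hS i1 (hκ _)), hT3 _ n _ (hκ a) (hS i2 (hκ _))]
        simp }
  have hV : ∀ a : (⨆ k, S k : Submodule ℂ E), ‖V a‖ ≤ 1 * ‖(⨆ k, S k).subtype a‖ := by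
    intro a
    rw [one_mul]
    exact hT _ _ (hκ a)
  have hdense : DenseRange (⨆ k, S k : Submodule ℂ E).subtype := by
    have : Set.range (⨆ k, S k : Submodule ℂ E).subtype = ⋃ k, (S k : Set E) := by
      ext a
      simp [hmem]
    rw [DenseRange, this]
    exact hd
  refine ⟨V.extendOfNorm (⨆ k, S k).subtype, ?_, ?_⟩
  · intro k a ha
    have h1 := LinearMap.extendOfNorm_eq (f := V) hdense ⟨1, hV⟩ ⟨a, (hmem a).2 ⟨k, ha⟩⟩
    refine h1.trans ?_
    exact hT3 _ _ _ (hκ ⟨a, (hmem a).2 ⟨k, ha⟩⟩) ha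
  · intro a
    have := LinearMap.norm_extendOfNorm_apply_le (f := V) hdense 1 hV a
    simpa using this

end Glue



section Reduction

variable {A : Type*} [NonUnitalCStarAlgebra A]

/-- the subalgebras of the unitization of the double -/
def dbl (S : NonUnitalStarSubalgebra ℂ A) : NonUnitalStarSubalgebra ℂ (Unitization ℂ (A × A)) where
  carrier := {d | d.snd.1 ∈ S ∧ d.snd.2 ∈ S}
  add_mem' := by
    rintro a b ⟨h1, h2⟩ ⟨h3, h4⟩
    exact ⟨add_mem h1 h3, add_mem h2 h4⟩
  zero_mem' := ⟨zero_mem S, zero_mem S⟩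
  mul_mem' := by
    rintro a b ⟨h1, h2⟩ ⟨h3, h4⟩
    refine ⟨?_, ?_⟩
    · simp only [Unitization.snd_mul, Prod.fst_add, Prod.smul_fst, Prod.fst_mul]
      exact add_mem (add_mem (SMulMemClass.smul_mem _ h3) (SMulMemClass.smul_mem _ h1))
        (mul_mem h1 h3)
    · simp only [Unitization.snd_mul, Prod.snd_add, Prod.smul_snd, Prod.snd_mul]
      exact add_mem (add_mem (SMulMemClass.smul_mem _ h4) (SMulMemClass.smul_mem _ h2))
        (mul_mem h2 h4)
  smul_mem' := by
    rintro c a ⟨h1, h2⟩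
    exact ⟨SMulMemClass.smul_mem c h1, SMulMemClass.smul_mem c h2⟩
  star_mem' := by
    rintro a ⟨h1, h2⟩
    exact ⟨star_mem h1, star_mem h2⟩

theorem mem_dbl {S : NonUnitalStarSubalgebra ℂ A} {d : Unitization ℂ (A × A)} :
    d ∈ dbl S ↔ d.snd.1 ∈ S ∧ d.snd.2 ∈ S := Iff.rfl

theorem dbl_fd (S : NonUnitalStarSubalgebra ℂ A) [FiniteDimensional ℂ S] :
    FiniteDimensional ℂ (dbl S) := by
  let L : dbl S →ₗ[ℂ] ℂ × (S × S) :=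
    { toFun := fun d => (d.1.fst, (⟨d.1.snd.1, d.2.1⟩, ⟨d.1.snd.2, d.2.2⟩))
      map_add' := fun a b => rfl
      map_smul' := fun c a => rfl }
  refine FiniteDimensional.of_injective L ?_
  intro a b hab
  have h1 : a.1.fst = b.1.fst := congrArg (fun z : ℂ × (S × S) => z.1) hab
  have h2 : a.1.snd.1 = b.1.snd.1 := congrArg (fun z : ℂ × (S × S) => (z.2.1 : A)) hab
  have h3 : a.1.snd.2 = b.1.snd.2 := congrArg (fun z : ℂ × (S × S) => (z.2.2 : A)) hab
  apply Subtype.ext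
  apply Unitization.ext h1
  exact Prod.ext h2 h3

/-- the scalars -/
def scal (D : Type*) [CStarAlgebra D] : NonUnitalStarSubalgebra ℂ D where
  carrier := {d | ∃ c : ℂ, d = c • (1 : D)}
  add_mem' := by
    rintro _ _ ⟨a, rfl⟩ ⟨b, rfl⟩
    exact ⟨a + b, (add_smul _ _ _).symm⟩
  zero_mem' := ⟨0, by simp⟩
  mul_mem' := by
    rintro _ _ ⟨a, rfl⟩ ⟨b, rfl⟩
    exact ⟨a * b, by simp [smul_smul, mul_comm]⟩
  smul_mem' := by
    rintro c _ ⟨a, rfl⟩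
    exact ⟨c * a, by rw [smul_smul]⟩
  star_mem' := by
    rintro _ ⟨a, rfl⟩
    exact ⟨star a, by simp⟩

theorem mem_scal {D : Type*} [CStarAlgebra D] {d : D} :
    d ∈ scal D ↔ ∃ c : ℂ, d = c • (1 : D) := Iff.rfl

theorem scal_fd (D : Type*) [CStarAlgebra D] : FiniteDimensional ℂ (scal D) := by
  let L : ℂ →ₗ[ℂ] scal D :=
    { toFun := fun c => ⟨c • (1 : D), c, rfl⟩
      map_add' := fun a b => Subtype.ext (add_smul _ _ _)
      map_smul' := fun c a => Subtype.ext (by simp [smul_smul]) }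
  refine FiniteDimensional.of_surjective L ?_
  rintro ⟨_, c, rfl⟩
  exact ⟨c, rfl⟩

/-- the tower in the unitization -/
noncomputable def tow (S : ℕ → NonUnitalStarSubalgebra ℂ A) :
    ℕ → NonUnitalStarSubalgebra ℂ (Unitization ℂ (A × A))
  | 0 => scal _
  | k + 1 => dbl (S k)

theorem tow_mono {S : ℕ → NonUnitalStarSubalgebra ℂ A} (hS : Monotone S) : Monotone (tow S) := by
  apply monotone_nat_of_le_succ
  intro k
  cases k with
  | zero =>
    intro d hd
    obtain ⟨c, rfl⟩ := mem_scal.1 hd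
    refine mem_dbl.2 ?_
    simp
  | succ k =>
    intro d hd
    exact mem_dbl.2 ⟨hS (Nat.le_succ k) hd.1, hS (Nat.le_succ k) hd.2⟩

theorem tow_fd {S : ℕ → NonUnitalStarSubalgebra ℂ A} (hS : ∀ k, FiniteDimensional ℂ (S k)) (k : ℕ) :
    FiniteDimensional ℂ (tow S k) := by
  cases k with
  | zero => exact scal_fd _
  | succ k => exact dbl_fd _

theorem tow_dense {S : ℕ → NonUnitalStarSubalgebra ℂ A} (hm : Monotone S)
    (hd : Dense (⋃ k, (S k : Set A))) : Dense (⋃ k, (tow S k : Set (Unitization ℂ (A × A)))) := by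
  let G : ℂ × (A × A) → Unitization ℂ (A × A) := fun p =>
    p.1 • (1 : Unitization ℂ (A × A)) + (p.2 : Unitization ℂ (A × A))
  have hG : Continuous G := by
    refine Continuous.add ?_ ?_
    · exact continuous_fst.smul continuous_const
    · exact (Unitization.isometry_inr (𝕜 := ℂ) (A := A × A)).continuous.comp continuous_snd
  have hGs : Function.Surjective G := by
    intro d
    refine ⟨(d.fst, d.snd), ?_⟩
    apply Unitization.ext
    · simp [G]
    · simp [G]
  have h1 : Dense ((Set.univ : Set ℂ) ×ˢ ((⋃ k, (S k : Set A)) ×ˢ (⋃ k, (S k : Set A)))) :=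
    dense_univ.prod (hd.prod hd)
  have h2 := hGs.denseRange.dense_image hG h1
  refine h2.mono ?_
  rintro _ ⟨⟨c, a, b⟩, ⟨-, ha, hb⟩, rfl⟩
  obtain ⟨i, hi⟩ := Set.mem_iUnion.1 ha
  obtain ⟨j, hj⟩ := Set.mem_iUnion.1 hb
  refine Set.mem_iUnion.2 ⟨max i j + 1, ?_⟩
  change _ ∈ dbl _
  rw [mem_dbl]
  constructor
  · simpa [G] using hm (le_max_left i j) hi
  · simpa [G] using hm (le_max_right i j) hj

/-- embedding of `A` in the double by signs -/
noncomputable def iot (A : Type*) [NonUnitalCStarAlgebra A] : A →ₗ[ℂ] Unitization ℂ (A × A) where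
  toFun a := ((a, -a) : A × A)
  map_add' a b := by
    rw [← Unitization.inr_add]
    congr 1
    ext
    · rfl
    · simp [add_comm]
  map_smul' c a := by
    rw [RingHom.id_apply, ← Unitization.inr_smul]
    congr 1
    ext
    · rfl
    · simp

theorem iot_norm (a : A) : ‖iot A a‖ = ‖a‖ := by
  change ‖(((a, -a) : A × A) : Unitization ℂ (A × A))‖ = ‖a‖
  rw [Unitization.norm_inr, Prod.norm_def]
  simp

/-- the left inverse of `iot` -/
noncomputable def kap (A : Type*) [NonUnitalCStarAlgebra A] : Unitization ℂ (A × A) →ₗ[ℂ] A where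
  toFun d := (1 / 2 : ℂ) • (d.snd.1 - d.snd.2)
  map_add' a b := by
    simp only [Unitization.snd_add, Prod.fst_add, Prod.snd_add]
    module
  map_smul' c a := by
    simp only [Unitization.snd_smul, Prod.smul_fst, Prod.smul_snd, RingHom.id_apply]
    module

theorem kap_norm (d : Unitization ℂ (A × A)) : ‖kap A d‖ ≤ ‖d‖ := by
  let π₁ := Unitization.starMap (R := ℂ) (NonUnitalStarAlgHom.fst ℂ A A)
  let π₂ := Unitization.starMap (R := ℂ) (NonUnitalStarAlgHom.snd ℂ A A)
  have h1 : ‖π₁ d‖ ≤ ‖d‖ := NonUnitalStarAlgHom.norm_apply_le π₁ d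
  have h2 : ‖π₂ d‖ ≤ ‖d‖ := NonUnitalStarAlgHom.norm_apply_le π₂ d
  have h3 : ((d.snd.1 - d.snd.2 : A) : Unitization ℂ A) = π₁ d - π₂ d := by
    apply Unitization.ext
    · simp [π₁, π₂]
    · simp [π₁, π₂]
  have h4 : ‖d.snd.1 - d.snd.2‖ ≤ ‖d‖ + ‖d‖ := by
    rw [← Unitization.norm_inr (𝕜 := ℂ), h3]
    exact (norm_sub_le _ _).trans (add_le_add h1 h2)
  change ‖(1 / 2 : ℂ) • (d.snd.1 - d.snd.2)‖ ≤ ‖d‖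
  rw [norm_smul]
  norm_num
  linarith

theorem kap_iot (a : A) : kap A (iot A a) = a := by
  change (1 / 2 : ℂ) • (a - -a) = a
  module

theorem main_aux {A B : Type*} [NonUnitalCStarAlgebra A] [NonUnitalCStarAlgebra B]
    (SA : ℕ → NonUnitalStarSubalgebra ℂ A) (hSA : IsAFPresentation A SA)
    (SB : ℕ → NonUnitalStarSubalgebra ℂ B) (hSB : IsAFPresentation B SB)
    (hFermion : HasFermionProperty B SB) :
    ∃ (γ : A →ₗ[ℂ] B) (δ : B →ₗ[ℂ] A),
      (∀ a, ‖γ a‖ ≤ ‖a‖) ∧ (∀ b : B, ‖δ b‖ ≤ ‖b‖) ∧ (∀ a : A, δ (γ a) = a) := by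
  obtain ⟨n, f, hn, hF⟩ := exists_fermionSeq SB hSB hFermion
  obtain ⟨hAm, hAf, hAd⟩ := hSA
  obtain ⟨hBm, hBf, hBd⟩ := hSB
  have hSm : Monotone (fun l => SB (n l)) := hBm.comp hn.monotone
  obtain ⟨l, γ, δ, hl, h1, h2, h3, h4, h5, h6⟩ := exists_tower (tow SA) (tow_mono hAm)
    (tow_fd hAf) (fun l => SB (n l)) hSm f ⟨1, by simp⟩ (fun a ha => ha) hF
  have hnl : StrictMono (fun k => n (l k)) := hn.comp hl
  obtain ⟨γ', g1, g2⟩ := glue (fun k => (tow SA k).toSubmodule) (tow_mono hAm)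
    (tow_dense hAm hAd) γ h2 h4
  obtain ⟨δ', d1, d2⟩ := glue (fun k => (SB (n (l k))).toSubmodule)
    (fun i j hij => hBm (hnl.monotone hij)) (by
      refine hBd.mono ?_
      intro b hb
      obtain ⟨k, hk⟩ := Set.mem_iUnion.1 hb
      exact Set.mem_iUnion.2 ⟨k, hBm hnl.le_apply hk⟩) δ h5 h6
  have key : ∀ d, δ' (γ' d) = d := by
    have hc : (fun d => δ' (γ' d)) = id := by
      refine Continuous.ext_on (tow_dense hAm hAd) (δ'.continuous.comp γ'.continuous)
        continuous_id ?_
      intro d hd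
      obtain ⟨k, hk⟩ := Set.mem_iUnion.1 hd
      change δ' (γ' d) = d
      rw [g1 k d hk, d1 k _ (h1 k d hk), h3 k d hk]
    exact fun d => congrFun hc d
  refine ⟨γ'.toLinearMap ∘ₗ iot A, kap A ∘ₗ δ'.toLinearMap, ?_, ?_, ?_⟩
  · intro a
    exact (g2 _).trans (iot_norm a).le
  · intro b
    exact (kap_norm _).trans (d2 b)
  · intro a
    change kap A (δ' (γ' (iot A a))) = a
    rw [key, kap_iot]

end Reduction


end FermionAF

theorem exists_complemented_contractive_injection
    (A B : Type*) [NonUnitalCStarAlgebra A] [NonUnitalCStarAlgebra B]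
    (SA : ℕ → NonUnitalStarSubalgebra ℂ A) (hSA : IsAFPresentation A SA)
    (SB : ℕ → NonUnitalStarSubalgebra ℂ B) (hSB : IsAFPresentation B SB)
    (hFermion : HasFermionProperty B SB) :
    ∃ (γ : A →ₗᵢ[ℂ] B) (δ : B →ₗ[ℂ] A),
      (∀ b : B, ‖δ b‖ ≤ ‖b‖) ∧
      (∀ a : A, δ (γ a) = a) ∧
      (∀ b : B, ‖γ (δ b)‖ ≤ ‖b‖) ∧
      (∀ b : B, γ (δ (γ (δ b))) = γ (δ b)) ∧
      Set.range (fun b : B => γ (δ b)) = Set.range γ := by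
  obtain ⟨γ, δ, h1, h2, h3⟩ := FermionAF.main_aux SA hSA SB hSB hFermion
  have hn : ∀ a, ‖γ a‖ = ‖a‖ := fun a => le_antisymm (h1 a) (by
    have := h2 (γ a)
    rwa [h3] at this)
  refine ⟨⟨γ, hn⟩, δ, h2, h3, fun b => (h1 _).trans (h2 b), fun b => ?_, ?_⟩
  · change γ (δ (γ (δ b))) = γ (δ b)
    rw [h3]
  · ext b
    constructor
    · rintro ⟨c, rfl⟩
      exact ⟨δ c, rfl⟩
    · rintro ⟨a, rfl⟩
      refine ⟨γ a, ?_⟩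
      change γ (δ (γ a)) = γ a
      rw [h3]
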